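/- arXiv:1205.0514 — 2 statements merged into one kernel-verified Lean document; each statement's English description precedes it below -/
import Mathlib

section
/- Let r₀ > 0 and let v be a harmonic field on the ball B_{r₀} ⊆ ℝ³ that does not vanish identically. Then h(r) = ∫_{∂B_r} |v|² dσ is strictly positive for every r ∈ (0, r₀), and the frequency function N(r) = r·H(r)/h(r), with H(r) = ∫_{B_r} |Dv|² dx, is nondecreasing on (0, r₀). -/
open MeasureTheory Metric
open scoped RealInnerProductSpace

noncomputable section

abbrev E3 := EuclideanSpace ℝ (Fin 3)

/-- A harmonic field on an open set `Ω ⊆ ℝ³`: a smooth map whose total derivative is at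
every point of `Ω` a symmetric, trace-free endomorphism of `ℝ³`. -/
def IsHarmonicField (Ω : Set E3) (v : E3 → E3) : Prop :=
  ContDiffOn ℝ (⊤ : ℕ∞) v Ω ∧
    ∀ x ∈ Ω,
      (∀ u w : E3, ⟪fderiv ℝ v x u, w⟫ = ⟪fderiv ℝ v x w, u⟫) ∧
      LinearMap.trace ℝ E3 (fderiv ℝ v x).toLinearMap = 0

/-- The square of the Frobenius norm of the total derivative of `v` at `x`. -/
def frobSq (v : E3 → E3) (x : E3) : ℝ :=
  ∑ i : Fin 3, ‖fderiv ℝ v x (EuclideanSpace.single i 1)‖ ^ 2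

/-! For harmonic `u` let `f s t` be the integral of `⟪u (s ω), u (t ω)⟫` over the unit sphere.
Green's identity for the two harmonic dilates `x ↦ u (s x)` and `x ↦ u (t x)` reads `s ∂ₛf = t ∂ₜf`,
so `f s t` depends only on `s * t`. Write `A`, `P`, `W` for the integrals over the unit sphere of
`⟪u, u⟫`, `⟪u, r ∂ᵣu⟫` and `⟪r ∂ᵣu, r ∂ᵣu⟫` at radius `r`. Then `r ∂ᵣA = 2 P` and, by the dependence
on `s * t` alone, `r ∂ᵣP = 2 W`, while `P ^ 2 ≤ A W` by Cauchy–Schwarz; hence `P / A` is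
nondecreasing, and by the divergence theorem it is the frequency up to a constant factor. This
factor is the ratio of two rotation-invariant measures on the sphere: the Hausdorff measure and the
one of polar coordinates. Finally `A s ^ 2 ≤ A r * A (s ^ 2 / r)`, so near a zero of `A` all values
vanish: the zero set is open and closed in `(0, R)`.
-/

open Filter Topology InnerProductSpace Laplacian Module

section ParametricIntegral

theorem hasDerivAt_integral_of_contDiffAt {X V G : Type*} [TopologicalSpace X] [CompactSpace X]
    [MeasurableSpace X] [OpensMeasurableSpace X] [NormedAddCommGroup V] [NormedSpace ℝ V]
    [NormedAddCommGroup G] [NormedSpace ℝ G] [SecondCountableTopologyEither X G]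
    {μ : Measure X} [IsFiniteMeasure μ] {ι : X → V} (hι : Continuous ι)
    {Φ : ℝ × V → G} {Φ' : X → G} {t₀ : ℝ} (hΦ : ∀ x, ContDiffAt ℝ 1 Φ (t₀, ι x))
    (hΦ' : ∀ x, HasDerivAt (fun t ↦ Φ (t, ι x)) (Φ' x) t₀) :
    HasDerivAt (fun t ↦ ∫ x, Φ (t, ι x) ∂μ) (∫ x, Φ' x ∂μ) t₀ := by
  have tube : ∀ {P : ℝ × V → Prop}, (∀ x, ∀ᶠ p in 𝓝 (t₀, ι x), P p) →
      ∀ᶠ t in 𝓝 t₀, ∀ x, P (t, ι x) := fun {P} hP ↦ by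
    have hpair : Continuous fun p : ℝ × X ↦ (p.1, ι p.2) := by fun_prop
    simpa using isCompact_univ.eventually_forall_of_forall_eventually
      (P := fun t x ↦ P (t, ι x)) fun x _ ↦ (hpair.tendsto (t₀, x)).eventually (hP x)
  have hsmooth := tube fun x ↦ (hΦ x).eventually (by simp)
  have hderiv : ∀ t x, ContDiffAt ℝ 1 Φ (t, ι x) →
      HasDerivAt (fun t ↦ Φ (t, ι x)) (fderiv ℝ Φ (t, ι x) (1, 0)) t := fun t x h ↦
    (h.differentiableAt one_ne_zero).hasFDerivAt.comp_hasDerivAt t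
      ((hasDerivAt_id t).prodMk (hasDerivAt_const t (ι x)))
  have hcont : ∀ x, ContinuousAt (fun p : ℝ × V ↦ fderiv ℝ Φ p (1, 0)) (t₀, ι x) := fun x ↦
    ((hΦ x).continuousAt_fderiv one_ne_zero).clm_apply continuousAt_const
  have hcont' : Continuous fun x ↦ fderiv ℝ Φ (t₀, ι x) (1, 0) :=
    continuous_iff_continuousAt.2 fun x ↦
      (hcont x).comp (f := fun x ↦ (t₀, ι x)) (by fun_prop)
  obtain ⟨C, hC⟩ := (isCompact_range hcont'.norm).bddAbove
  have hbound : ∀ᶠ t in 𝓝 t₀, ∀ x, ‖fderiv ℝ Φ (t, ι x) (1, 0)‖ < C + 1 := tube fun x ↦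
    (hcont x).norm.eventually_lt_const ((hC ⟨x, rfl⟩).trans_lt (lt_add_one C))
  have hslice : ∀ t, (∀ x, ContDiffAt ℝ 1 Φ (t, ι x)) → Continuous fun x ↦ Φ (t, ι x) :=
    fun t h ↦ continuous_iff_continuousAt.2 fun x ↦
      (h x).continuousAt.comp (f := fun x ↦ (t, ι x)) (by fun_prop)
  have hΦ'_eq : Φ' = fun x ↦ fderiv ℝ Φ (t₀, ι x) (1, 0) :=
    funext fun x ↦ (hΦ' x).unique (hderiv t₀ x (hΦ x))
  rw [hΦ'_eq]
  exact (hasDerivAt_integral_of_dominated_loc_of_deriv_le (hbound.and hsmooth)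
    (hsmooth.mono fun t h ↦ (hslice t h).aestronglyMeasurable)
    ((hslice t₀ hΦ).integrable_of_hasCompactSupport (.of_compactSpace _))
    hcont'.aestronglyMeasurable
    (ae_of_all _ fun x t ht ↦ (ht.1 x).le) (integrable_const (C + 1))
    (ae_of_all _ fun x t ht ↦ hderiv t x (ht.2 x))).2

end ParametricIntegral

section SphereInvariance

open scoped Pointwise in
theorem measurePreserving_toSphere_map_coe {E E' : Type*} [NormedAddCommGroup E] [NormedSpace ℝ E]
    [MeasurableSpace E] [BorelSpace E] [NormedAddCommGroup E'] [NormedSpace ℝ E']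
    [MeasurableSpace E'] [BorelSpace E'] {μ : Measure E} {ν : Measure E'} (L : E ≃ₗᵢ[ℝ] E')
    (hL : MeasurePreserving L μ ν) :
    MeasurePreserving L (μ.toSphere.map (↑)) (ν.toSphere.map (↑)) := by
  refine ⟨L.continuous.measurable, Measure.ext fun s hs ↦ ?_⟩
  have hLs := L.continuous.measurable hs
  have hcone : L ⁻¹' (Set.Ioo (0 : ℝ) 1 • (sphere (0 : E') 1 ∩ s)) =
      Set.Ioo (0 : ℝ) 1 • (sphere (0 : E) 1 ∩ L ⁻¹' s) := by
    have himage : ∀ t, L ⁻¹' t = L.symm '' t := fun t ↦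
      (L.toEquiv.symm.image_eq_preimage_symm t).symm
    have hsphere : L ⁻¹' sphere 0 1 = sphere 0 1 := by ext; simp
    rw [← hsphere, ← Set.preimage_inter, himage, himage]
    exact Set.image_image2_distrib_right fun t x ↦ map_smul L.symm t x
  rw [Measure.map_apply L.continuous.measurable hs, Measure.map_apply measurable_subtype_coe hLs,
    Measure.map_apply measurable_subtype_coe hs, μ.toSphere_apply' (measurable_subtype_coe hLs),
    ν.toSphere_apply' (measurable_subtype_coe hs), Subtype.image_preimage_coe,
    Subtype.image_preimage_coe, ← hcone, hL.measure_preimage_emb L.toHomeomorph.measurableEmbedding,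
    L.toLinearEquiv.finrank_eq]

variable {E : Type*} [NormedAddCommGroup E] [InnerProductSpace ℝ E] [MeasurableSpace E]
  [BorelSpace E] [FiniteDimensional ℝ E]

theorem integral_toSphere_comp_linearIsometryEquiv {G : Type*} [NormedAddCommGroup G]
    [NormedSpace ℝ G] (L : E ≃ₗᵢ[ℝ] E) (f : E → G) :
    ∫ ω : sphere (0 : E) 1, f (L ω) ∂volume.toSphere =
      ∫ ω : sphere (0 : E) 1, f ω ∂volume.toSphere := by
  have hcoe := MeasurableEmbedding.subtype_coe
    (isClosed_sphere (x := (0 : E)) (ε := 1)).measurableSet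
  rw [← hcoe.integral_map, ← hcoe.integral_map (μ := volume.toSphere) fun x ↦ f (L x),
    (measurePreserving_toSphere_map_coe L L.measurePreserving).integral_comp
      L.toHomeomorph.measurableEmbedding]

theorem integral_toSphere_inner_right (e : E) :
    ∫ ω : sphere (0 : E) 1, ⟪e, (ω : E)⟫ ∂volume.toSphere = 0 := by
  have := integral_toSphere_comp_linearIsometryEquiv (.neg ℝ) fun x : E ↦ ⟪e, x⟫
  simp only [LinearIsometryEquiv.coe_neg, inner_neg_right, integral_neg] at this
  linarith

theorem integral_toSphere_fderiv_skewAdjoint {g : E → ℝ}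
    (hg : ∀ ω ∈ sphere (0 : E) 1, ContDiffAt ℝ 1 g ω) {A : E →L[ℝ] E}
    (hA : A ∈ skewAdjoint (E →L[ℝ] E)) :
    ∫ ω : sphere (0 : E) 1, fderiv ℝ g ω (A ω) ∂volume.toSphere = 0 := by
  have hconst : ∀ t : ℝ, ∫ ω : sphere (0 : E) 1, g (NormedSpace.exp (t • A) ω) ∂volume.toSphere =
      ∫ ω : sphere (0 : E) 1, g ω ∂volume.toSphere := fun t ↦ by
    let : NormedAlgebra ℚ (E →L[ℝ] E) := .restrictScalars ℚ ℝ _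
    have hU : NormedSpace.exp (t • A) ∈ unitary (E →L[ℝ] E) :=
      NormedSpace.exp_mem_unitary_of_mem_skewAdjoint (skewAdjoint.smul_mem t hA)
    exact integral_toSphere_comp_linearIsometryEquiv (Unitary.linearIsometryEquiv ⟨_, hU⟩) g
  have hflow : ∀ x : E, HasDerivAt (fun t : ℝ ↦ NormedSpace.exp (t • A) x) (A x) 0 := fun x ↦ by
    simpa using (hasDerivAt_exp_smul_const A (0 : ℝ)).clm_apply (hasDerivAt_const 0 x)
  have hexp : ContDiff ℝ 1 (NormedSpace.exp : (E →L[ℝ] E) → E →L[ℝ] E) :=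
    contDiff_iff_contDiffAt.2 fun B ↦ (NormedSpace.exp_analytic (𝕂 := ℝ) B).contDiffAt
  have hsmooth : ContDiff ℝ 1 fun p : ℝ × E ↦ NormedSpace.exp (p.1 • A) p.2 :=
    (hexp.comp (contDiff_fst.smul contDiff_const)).clm_apply contDiff_snd
  have hderiv := hasDerivAt_integral_of_contDiffAt (μ := (volume : Measure E).toSphere)
    (ι := ((↑) : sphere (0 : E) 1 → E)) continuous_subtype_val
    (Φ := fun p ↦ g (NormedSpace.exp (p.1 • A) p.2)) (t₀ := 0)
    (fun ω ↦ ContDiffAt.comp (0, (ω : E)) (by simpa using hg ω ω.2) hsmooth.contDiffAt)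
    (fun ω ↦ by
      have hgω := (hg ω ω.2).differentiableAt one_ne_zero |>.hasFDerivAt
      exact HasFDerivAt.comp_hasDerivAt_of_eq 0 hgω (hflow ω) (by simp))
  simp only [hconst] at hderiv
  exact hderiv.unique (hasDerivAt_const _ _)

end SphereInvariance

section SphereIntegrationByParts

variable {E : Type*} [NormedAddCommGroup E] [InnerProductSpace ℝ E]

theorem fderiv_inner_mul_rankOne_sub_rankOne {g : E → ℝ} {x : E} (hg : DifferentiableAt ℝ g x)
    (b e : E) : fderiv ℝ (fun y ↦ ⟪b, y⟫ * g y) x ((rankOne ℝ e b - rankOne ℝ b e) x) =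
      fderiv ℝ g x (⟪b, x⟫ • (⟪b, x⟫ • e - ⟪e, x⟫ • b)) +
        (⟪b, x⟫ * ⟪b, e⟫ - ⟪e, x⟫ * ⟪b, b⟫) * g x := by
  have h := (((innerSL ℝ b).hasFDerivAt (x := x)).fun_mul hg.hasFDerivAt).fderiv
  simp only [innerSL_apply_apply] at h
  rw [h]
  simp [rankOne_apply, inner_sub_right, inner_smul_right]
  ring

theorem sum_fderiv_inner_mul_rankOne_sub_rankOne {ι : Type*} [Fintype ι]
    (b : OrthonormalBasis ι ℝ E) {g : E → ℝ} {x : E} (hg : DifferentiableAt ℝ g x) (e : E) :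
    ∑ i, fderiv ℝ (fun y ↦ ⟪b i, y⟫ * g y) x ((rankOne ℝ e (b i) - rankOne ℝ (b i) e) x) =
      fderiv ℝ g x (‖x‖ ^ 2 • e - ⟪e, x⟫ • x) - (Fintype.card ι - 1) * (g x * ⟪e, x⟫) := by
  have hvec : ∑ i, ⟪b i, x⟫ • (⟪b i, x⟫ • e - ⟪e, x⟫ • b i) = ‖x‖ ^ 2 • e - ⟪e, x⟫ • x := by
    simp_rw [smul_sub, smul_comm _ ⟪e, x⟫, Finset.sum_sub_distrib, ← Finset.smul_sum,
      smul_smul, ← Finset.sum_smul, b.sum_repr', ← pow_two, b.sum_sq_inner_right]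
  have hcoef : ∑ i, (⟪b i, x⟫ * ⟪b i, e⟫ - ⟪e, x⟫ * ⟪b i, b i⟫) =
      -(Fintype.card ι - 1) * ⟪e, x⟫ := by
    simp_rw [real_inner_comm x, Finset.sum_sub_distrib, b.sum_inner_mul_inner]
    simp
    ring
  simp only [fderiv_inner_mul_rankOne_sub_rankOne hg, Finset.sum_add_distrib, ← map_sum,
    ← Finset.sum_mul, hvec, hcoef]
  ring

variable [FiniteDimensional ℝ E]

theorem rankOne_sub_rankOne_mem_skewAdjoint (x y : E) :
    rankOne ℝ x y - rankOne ℝ y x ∈ skewAdjoint (E →L[ℝ] E) := by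
  simp [skewAdjoint.mem_iff, ContinuousLinearMap.star_eq_adjoint]

variable [MeasurableSpace E] [BorelSpace E]

theorem integrable_toSphere_of_continuousOn {G : Type*} [NormedAddCommGroup G] {f : E → G}
    (hf : ContinuousOn f (sphere 0 1)) :
    Integrable (fun ω : sphere (0 : E) 1 ↦ f ω) volume.toSphere :=
  (continuousOn_iff_continuous_domRestrict.1 hf).integrable_of_hasCompactSupport
    (.of_compactSpace _)

theorem integrable_toSphere_fderiv {g : E → ℝ} (hg : ∀ ω ∈ sphere (0 : E) 1, ContDiffAt ℝ 1 g ω)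
    {V : E → E} (hV : Continuous V) :
    Integrable (fun ω : sphere (0 : E) 1 ↦ fderiv ℝ g ω (V ω)) volume.toSphere :=
  integrable_toSphere_of_continuousOn (f := fun x ↦ fderiv ℝ g x (V x)) fun ω hω ↦
    (((hg ω hω).continuousAt_fderiv one_ne_zero).clm_apply hV.continuousAt).continuousWithinAt

-- The rotation fields `x ↦ ⟪b i, x⟫ • e - ⟪e, x⟫ • b i`, weighted by `⟪b i, x⟫`, add up to the
-- tangential part of `e` on the unit sphere.
theorem integral_toSphere_fderiv_tangential {n : ℕ} (hn : finrank ℝ E = n + 1) {g : E → ℝ}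
    (hg : ∀ ω ∈ sphere (0 : E) 1, ContDiffAt ℝ 1 g ω) (e : E) :
    ∫ ω : sphere (0 : E) 1, fderiv ℝ g ω (e - ⟪e, ω⟫ • (ω : E)) ∂volume.toSphere =
      n * ∫ ω : sphere (0 : E) 1, g ω * ⟪e, ω⟫ ∂volume.toSphere := by
  let b := stdOrthonormalBasis ℝ E
  let A i := rankOne ℝ e (b i) - rankOne ℝ (b i) e
  have hbg : ∀ i, ∀ ω ∈ sphere (0 : E) 1, ContDiffAt ℝ 1 (fun y ↦ ⟪b i, y⟫ * g y) ω :=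
    fun i ω hω ↦ (innerSL ℝ (b i)).contDiff.contDiffAt.mul (hg ω hω)
  have hgint : Integrable (fun ω : sphere (0 : E) 1 ↦ n * (g ω * ⟪e, ω⟫)) volume.toSphere :=
    integrable_toSphere_of_continuousOn (f := fun x ↦ n * (g x * ⟪e, x⟫)) fun ω hω ↦
      (continuousAt_const.mul ((hg ω hω).continuousAt.mul (by fun_prop))).continuousWithinAt
  have hsum : ∀ ω : sphere (0 : E) 1, ∑ i, fderiv ℝ (fun y ↦ ⟪b i, y⟫ * g y) ω (A i ω) =
      fderiv ℝ g ω (e - ⟪e, ω⟫ • (ω : E)) - n * (g ω * ⟪e, ω⟫) := fun ω ↦ by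
    rw [sum_fderiv_inner_mul_rankOne_sub_rankOne b ((hg ω ω.2).differentiableAt one_ne_zero)]
    simp [hn]
  have hzero := integral_finsetSum Finset.univ fun i _ ↦
    integrable_toSphere_fderiv (hbg i) (A i).continuous
  simp_rw [hsum, A, integral_toSphere_fderiv_skewAdjoint (hbg _)
    (rankOne_sub_rankOne_mem_skewAdjoint e (b _)), Finset.sum_const_zero] at hzero
  rw [integral_sub (integrable_toSphere_fderiv hg (V := fun x ↦ e - ⟪e, x⟫ • x) (by fun_prop))
    hgint, integral_const_mul] at hzero
  exact sub_eq_zero.1 hzero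

end SphereIntegrationByParts

section PolarCoordinates

variable {E : Type*} [NormedAddCommGroup E] [NormedSpace ℝ E] [MeasurableSpace E] [BorelSpace E]
  [FiniteDimensional ℝ E] {μ : Measure E} [μ.IsAddHaarMeasure] {n : ℕ}
  {G : Type*} [NormedAddCommGroup G] [NormedSpace ℝ G]

theorem integral_volumeIoiPow (f : ℝ → G) :
    ∫ s : Set.Ioi (0 : ℝ), f s ∂Measure.volumeIoiPow n = ∫ s in Set.Ioi (0 : ℝ), s ^ n • f s := by
  simp only [Measure.volumeIoiPow, ENNReal.ofReal]
  rw [integral_withDensity_eq_integral_smul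
      ((measurable_subtype_coe.pow_const _).real_toNNReal),
    integral_subtype_comap measurableSet_Ioi fun a : ℝ ↦ (a ^ n).toNNReal • f a]
  refine setIntegral_congr_fun measurableSet_Ioi fun s hs ↦ ?_
  simp only [NNReal.smul_def, Real.coe_toNNReal _ (pow_nonneg (le_of_lt hs) n)]

theorem integral_eq_integral_Ioi_toSphere (hn : finrank ℝ E = n + 1) {f : E → G}
    (hf : Integrable f μ) : ∫ x, f x ∂μ =
      ∫ s in Set.Ioi (0 : ℝ), s ^ n • ∫ ω : sphere (0 : E) 1, f (s • (ω : E)) ∂μ.toSphere := by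
  have : Nontrivial E := nontrivial_of_finrank_pos (R := ℝ) (by omega)
  have hpolar := μ.measurePreserving_homeomorphUnitSphereProd
  have hemb := (homeomorphUnitSphereProd E).measurableEmbedding
  simp only [hn, Nat.add_sub_cancel] at hpolar
  let g : sphere (0 : E) 1 × Set.Ioi (0 : ℝ) → G := fun p ↦ f ((p.2 : ℝ) • (p.1 : E))
  have hg : g ∘ homeomorphUnitSphereProd E = f ∘ (↑) := funext fun x ↦ by
    have hx : ‖(x : E)‖ ≠ 0 := norm_ne_zero_iff.2 x.2
    simp [g, smul_smul, hx]
  have hg_int : Integrable g (μ.toSphere.prod (Measure.volumeIoiPow n)) := by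
    rw [← hpolar.integrable_comp_emb hemb, hg,
      ← integrableOn_iff_comap_subtypeVal (measurableSet_singleton _).compl]
    exact hf.integrableOn
  calc ∫ x, f x ∂μ = ∫ x : ({0}ᶜ : Set E), f x ∂μ.comap (↑) := by
        rw [integral_subtype_comap (measurableSet_singleton _).compl f, restrict_compl_singleton]
    _ = ∫ p, g p ∂μ.toSphere.prod (Measure.volumeIoiPow n) := by
        rw [← hpolar.integral_comp hemb]
        exact integral_congr_ae (ae_of_all _ fun x ↦ (congrFun hg x).symm)
    _ = ∫ s : Set.Ioi (0 : ℝ), ∫ ω, g (ω, s) ∂μ.toSphere ∂Measure.volumeIoiPow n :=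
        integral_prod_symm _ hg_int
    _ = _ := integral_volumeIoiPow fun s ↦ ∫ ω : sphere (0 : E) 1, f (s • (ω : E)) ∂μ.toSphere

theorem setIntegral_ball_eq_intervalIntegral_toSphere (hn : finrank ℝ E = n + 1) {f : E → G}
    {r : ℝ} (hr : 0 ≤ r) (hf : IntegrableOn f (ball 0 r) μ) : ∫ x in ball 0 r, f x ∂μ =
      ∫ s in (0 : ℝ)..r, s ^ n • ∫ ω : sphere (0 : E) 1, f (s • (ω : E)) ∂μ.toSphere := by
  rw [← integral_indicator measurableSet_ball, integral_eq_integral_Ioi_toSphere hn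
    (hf.integrable_indicator measurableSet_ball), intervalIntegral.integral_of_le hr,
    integral_Ioc_eq_integral_Ioo, ← Set.Ioi_inter_Iio, ← setIntegral_indicator measurableSet_Iio]
  refine setIntegral_congr_fun measurableSet_Ioi fun s (hs : 0 < s) ↦ ?_
  have hmem : ∀ ω : sphere (0 : E) 1, s • (ω : E) ∈ ball 0 r ↔ s < r := fun ω ↦ by
    simp [norm_smul, abs_of_pos hs]
  by_cases hsr : s < r <;> simp [Set.indicator, hmem, hsr]

end PolarCoordinates

section Gradient

theorem smul_mem_ball_of_mem_sphere {E : Type*} [NormedAddCommGroup E] [NormedSpace ℝ E] {R s : ℝ}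
    (hs : s ∈ Set.Ioo (-R) R) {ω : E} (hω : ω ∈ sphere 0 1) : s • ω ∈ ball (0 : E) R := by
  simpa [norm_smul, mem_sphere_zero_iff_norm.1 hω, abs_lt] using hs

variable {E : Type*} [NormedAddCommGroup E] [InnerProductSpace ℝ E] [MeasurableSpace E]
  [BorelSpace E] [FiniteDimensional ℝ E] {R : ℝ}

theorem continuousOn_integral_toSphere_smul {G : Type*} [NormedAddCommGroup G] [NormedSpace ℝ G]
    {f : E → G} (hf : ContinuousOn f (ball 0 R)) :
    ContinuousOn (fun s : ℝ ↦ ∫ ω : sphere (0 : E) 1, f (s • (ω : E)) ∂volume.toSphere)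
      (Set.Ioo (-R) R) :=
  continuousOn_integral_of_compact_support (k := Set.univ) isCompact_univ
    (hf.comp (f := fun p : ℝ × sphere (0 : E) 1 ↦ p.1 • (p.2 : E)) (by fun_prop)
      fun p hp ↦ smul_mem_ball_of_mem_sphere hp.1 p.2.2) (by simp)

theorem integrableOn_ball_of_continuousOn {G : Type*} [NormedAddCommGroup G] {f : E → G}
    (hf : ContinuousOn f (ball 0 R)) {r : ℝ} (hr : r < R) : IntegrableOn f (ball 0 r) :=
  ((hf.mono (closedBall_subset_ball hr)).integrableOn_compact (isCompact_closedBall _ _)).mono_set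
    ball_subset_closedBall

variable {g : E → ℝ}

theorem hasDerivAt_integral_toSphere_smul_mul_inner (hg : ContDiffOn ℝ 1 g (ball 0 R)) (e : E)
    {s : ℝ} (hs : s ∈ Set.Ioo (-R) R) :
    HasDerivAt (fun s ↦ ∫ ω : sphere (0 : E) 1, g (s • (ω : E)) * ⟪e, ω⟫ ∂volume.toSphere)
      (∫ ω : sphere (0 : E) 1, fderiv ℝ g (s • (ω : E)) ω * ⟪e, ω⟫ ∂volume.toSphere) s := by
  have hgs : ∀ ω : sphere (0 : E) 1, ContDiffAt ℝ 1 g (s • (ω : E)) := fun ω ↦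
    hg.contDiffAt (isOpen_ball.mem_nhds (smul_mem_ball_of_mem_sphere hs ω.2))
  refine hasDerivAt_integral_of_contDiffAt (Φ := fun p ↦ g (p.1 • p.2) * ⟪e, p.2⟫)
    continuous_subtype_val (fun ω ↦ ?_) (fun ω ↦ ?_)
  · exact ((hgs ω).comp (s, (ω : E)) (by fun_prop)).mul (contDiffAt_const.inner ℝ contDiffAt_snd)
  · simpa using (((hgs ω).differentiableAt one_ne_zero).hasFDerivAt.comp_hasDerivAt s
      ((hasDerivAt_id s).smul_const (ω : E))).mul_const ⟪e, (ω : E)⟫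

theorem integral_toSphere_smul_fderiv_tangential {n : ℕ} (hn : finrank ℝ E = n + 1)
    (hg : ContDiffOn ℝ 1 g (ball 0 R)) (e : E) {s : ℝ} (hs : s ∈ Set.Ioo (-R) R) :
    s * ∫ ω : sphere (0 : E) 1, fderiv ℝ g (s • (ω : E)) (e - ⟪e, ω⟫ • (ω : E)) ∂volume.toSphere =
      n * ∫ ω : sphere (0 : E) 1, g (s • (ω : E)) * ⟪e, ω⟫ ∂volume.toSphere := by
  rw [← integral_toSphere_fderiv_tangential hn (g := fun x ↦ g (s • x)) fun ω hω ↦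
    (hg.contDiffAt (isOpen_ball.mem_nhds (smul_mem_ball_of_mem_sphere hs hω))).comp ω (by fun_prop)]
  simp only [fderiv_comp_smul, smul_apply, smul_eq_mul, integral_const_mul]

theorem hasDerivAt_pow_mul_integral_toSphere {n : ℕ} (hn : finrank ℝ E = n + 1)
    (hg : ContDiffOn ℝ 1 g (ball 0 R)) (e : E) {s : ℝ} (hs : s ∈ Set.Ioo 0 R) :
    HasDerivAt (fun s ↦ s ^ n * ∫ ω : sphere (0 : E) 1, g (s • (ω : E)) * ⟪e, ω⟫ ∂volume.toSphere)
      (s ^ n * ∫ ω : sphere (0 : E) 1, fderiv ℝ g (s • (ω : E)) e ∂volume.toSphere) s := by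
  have hs' : s ∈ Set.Ioo (-R) R := ⟨by linarith [hs.1, hs.2], hs.2⟩
  have hint : ∀ {V : E → E}, Continuous V → Integrable
      (fun ω : sphere (0 : E) 1 ↦ fderiv ℝ g (s • (ω : E)) (V ω)) volume.toSphere := fun {V} hV ↦
    integrable_toSphere_of_continuousOn (f := fun x ↦ fderiv ℝ g (s • x) (V x)) <|
      ((hg.continuousOn_fderiv_of_isOpen isOpen_ball le_rfl).comp (by fun_prop) fun ω hω ↦
        smul_mem_ball_of_mem_sphere hs' hω).clm_apply hV.continuousOn
  have htangential := integral_toSphere_smul_fderiv_tangential hn hg e hs'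
  have hsplit : ∫ ω : sphere (0 : E) 1, fderiv ℝ g (s • (ω : E)) e ∂volume.toSphere =
      (∫ ω : sphere (0 : E) 1, fderiv ℝ g (s • (ω : E)) (e - ⟪e, ω⟫ • (ω : E)) ∂volume.toSphere) +
      ∫ ω : sphere (0 : E) 1, fderiv ℝ g (s • (ω : E)) ω * ⟪e, ω⟫ ∂volume.toSphere := by
    rw [← integral_add (hint (V := fun x ↦ e - ⟪e, x⟫ • x) (by fun_prop))]
    · simp [mul_comm]
    · simpa [mul_comm] using hint (V := fun x ↦ ⟪e, x⟫ • x) (by fun_prop)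
  refine ((hasDerivAt_pow n s).fun_mul
    (hasDerivAt_integral_toSphere_smul_mul_inner hg e hs')).congr_deriv ?_
  have hpow : (n : ℝ) * s ^ (n - 1) * s = n * s ^ n := by cases n <;> simp [pow_succ, mul_assoc]
  refine mul_right_cancel₀ hs.1.ne' ?_
  rw [hsplit]
  linear_combination -s ^ n * htangential + hpow *
    ∫ ω : sphere (0 : E) 1, g (s • (ω : E)) * ⟪e, ω⟫ ∂volume.toSphere

theorem setIntegral_ball_fderiv {n : ℕ} (hn : finrank ℝ E = n + 1)
    (hg : ContDiffOn ℝ 1 g (ball 0 R)) (e : E) {r : ℝ} (hr : r ∈ Set.Ioo 0 R) :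
    ∫ x in ball 0 r, fderiv ℝ g x e =
      r ^ n * ∫ ω : sphere (0 : E) 1, g (r • (ω : E)) * ⟪e, ω⟫ ∂volume.toSphere := by
  have hsub : Set.Icc 0 r ⊆ Set.Ioo (-R) R := fun s hs ↦
    ⟨by linarith [hs.1, hr.1, hr.2], hs.2.trans_lt hr.2⟩
  have hDg : ContinuousOn (fun x ↦ fderiv ℝ g x e) (ball 0 R) :=
    (hg.continuousOn_fderiv_of_isOpen isOpen_ball le_rfl).clm_apply continuousOn_const
  have hflux_zero :
      ∫ ω : sphere (0 : E) 1, g ((0 : ℝ) • (ω : E)) * ⟪e, ω⟫ ∂volume.toSphere = 0 := by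
    simp [integral_const_mul, integral_toSphere_inner_right]
  rw [setIntegral_ball_eq_intervalIntegral_toSphere hn hr.1.le
    (integrableOn_ball_of_continuousOn hDg hr.2)]
  simp only [smul_eq_mul]
  rw [intervalIntegral.integral_eq_sub_of_hasDerivAt_of_le hr.1.le
    (f := fun s ↦ s ^ n * ∫ ω : sphere (0 : E) 1, g (s • (ω : E)) * ⟪e, ω⟫ ∂volume.toSphere)
    (fun s hs ↦ ((continuous_pow n).continuousAt.mul
      (hasDerivAt_integral_toSphere_smul_mul_inner hg e (hsub hs)).continuousAt).continuousWithinAt)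
    (fun s hs ↦ hasDerivAt_pow_mul_integral_toSphere hn hg e ⟨hs.1, hs.2.trans hr.2⟩), hflux_zero]
  · simp
  · exact ((continuous_pow n).continuousOn.smul
      ((continuousOn_integral_toSphere_smul hDg).mono hsub)).intervalIntegrable_of_Icc hr.1.le

end Gradient

section RadialDerivative

variable {E F : Type*} [NormedAddCommGroup E] [NormedSpace ℝ E] [NormedAddCommGroup F]
  [NormedSpace ℝ F]

/-- The derivative of `u` along the Euler field `x ↦ x`, i.e. `r ∂_r u` in polar coordinates. -/
def radialDeriv (u : E → F) (x : E) : F :=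
  fderiv ℝ u x x

theorem radialDeriv_comp_smul (u : E → F) (c : ℝ) :
    radialDeriv (fun x ↦ u (c • x)) = fun x ↦ radialDeriv u (c • x) := by
  ext x
  simp [radialDeriv, fderiv_comp_smul]

theorem hasDerivAt_comp_smul {f : E → F} {c : ℝ → ℝ} {t : ℝ} {x : E}
    (hf : DifferentiableAt ℝ f (c t • x)) (hc : DifferentiableAt ℝ c t) (hct : c t ≠ 0) :
    HasDerivAt (fun τ ↦ f (c τ • x)) (logDeriv c t • radialDeriv f (c t • x)) t := by
  refine (hf.hasFDerivAt.comp_hasDerivAt t (hc.hasDerivAt.smul_const x)).congr_deriv ?_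
  simp [radialDeriv, logDeriv_apply, smul_smul, div_mul_cancel₀ _ hct]

theorem contDiffOn_radialDeriv {u : E → F} {R : ℝ} (hu : ContDiffOn ℝ 2 u (ball 0 R)) :
    ContDiffOn ℝ 1 (radialDeriv u) (ball 0 R) :=
  (hu.fderiv_of_isOpen isOpen_ball le_rfl).clm_apply contDiffOn_id

theorem continuousOn_radialDeriv {u : E → F} {R : ℝ} (hu : ContDiffOn ℝ 1 u (ball 0 R)) :
    ContinuousOn (radialDeriv u) (ball 0 R) :=
  (hu.continuousOn_fderiv_of_isOpen isOpen_ball le_rfl).clm_apply continuousOn_id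

end RadialDerivative

section HarmonicDilation

theorem fderiv_fderiv_comp_smul {E F : Type*} [NormedAddCommGroup E] [NormedSpace ℝ E]
    [NormedAddCommGroup F] [NormedSpace ℝ F] (u : E → F) (c : ℝ) (x : E) :
    fderiv ℝ (fderiv ℝ (fun x ↦ u (c • x))) x = c ^ 2 • fderiv ℝ (fderiv ℝ u) (c • x) := by
  have hD : fderiv ℝ (fun x ↦ u (c • x)) = c • fun x ↦ fderiv ℝ u (c • x) :=
    funext fun _ ↦ fderiv_comp_smul c
  rw [hD, fderiv_const_smul_field (f := fun x ↦ fderiv ℝ u (c • x)) c, Pi.smul_apply,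
    fderiv_comp_smul, smul_smul, pow_two]

variable {E F : Type*} [NormedAddCommGroup E] [InnerProductSpace ℝ E] [FiniteDimensional ℝ E]
  [NormedAddCommGroup F] [NormedSpace ℝ F]

theorem laplacian_comp_smul (u : E → F) (c : ℝ) :
    Δ (fun x ↦ u (c • x)) = fun x ↦ c ^ 2 • Δ u (c • x) := by
  ext x
  simp [laplacian_eq_iteratedFDeriv_stdOrthonormalBasis, iteratedFDeriv_two_apply,
    fderiv_fderiv_comp_smul, Finset.smul_sum]

theorem harmonicAt_comp_smul {u : E → F} {c : ℝ} {x : E} (hu : HarmonicAt u (c • x)) :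
    HarmonicAt (fun y ↦ u (c • y)) x := by
  refine ⟨hu.1.comp x (by fun_prop), ?_⟩
  have hcont : Tendsto (c • ·) (𝓝 x) (𝓝 (c • x)) := (continuous_const_smul c).tendsto x
  filter_upwards [hcont.eventually hu.2] with y hy
  simp [laplacian_comp_smul, hy]

end HarmonicDilation

section SphericalPairing

variable {E F : Type*} [NormedAddCommGroup E] [InnerProductSpace ℝ E] [FiniteDimensional ℝ E]
  [NormedAddCommGroup F] [InnerProductSpace ℝ F] {u w : E → F}

theorem sum_fderiv_inner_fderiv {ι : Type*} [Fintype ι] (b : OrthonormalBasis ι ℝ E) {x : E}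
    (hu : DifferentiableAt ℝ u x) (hw : HarmonicAt w x) :
    ∑ i, fderiv ℝ (fun y ↦ ⟪u y, fderiv ℝ w y (b i)⟫) x (b i) =
      ∑ i, ⟪fderiv ℝ u x (b i), fderiv ℝ w x (b i)⟫ := by
  have hDw : DifferentiableAt ℝ (fderiv ℝ w) x :=
    (hw.1.fderiv_right (m := 1) le_rfl).differentiableAt one_ne_zero
  have hlap : ∑ i, fderiv ℝ (fderiv ℝ w) x (b i) (b i) = 0 := by
    simpa [laplacian_eq_iteratedFDeriv_orthonormalBasis w b, iteratedFDeriv_two_apply]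
      using hw.2.self_of_nhds
  have hterm : ∀ i, fderiv ℝ (fun y ↦ ⟪u y, fderiv ℝ w y (b i)⟫) x (b i) =
      ⟪u x, fderiv ℝ (fderiv ℝ w) x (b i) (b i)⟫ + ⟪fderiv ℝ u x (b i), fderiv ℝ w x (b i)⟫ :=
    fun i ↦ by
      rw [fderiv_inner_apply ℝ hu (hDw.clm_apply (differentiableAt_const _)),
        fderiv_clm_apply hDw (differentiableAt_const _)]
      simp
  simp_rw [hterm, Finset.sum_add_distrib, ← inner_sum, hlap, inner_zero_right, zero_add]

variable [MeasurableSpace E] [BorelSpace E]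

/-- The `L²` pairing over the unit sphere of the traces of `u` and `w` on the spheres of radii
`s` and `t`, rescaled to the unit sphere. -/
def sphericalPairing (u w : E → F) (s t : ℝ) : ℝ :=
  ∫ ω : sphere (0 : E) 1, ⟪u (s • (ω : E)), w (t • (ω : E))⟫ ∂volume.toSphere

variable {R : ℝ}

theorem pow_mul_sphericalPairing_radialDeriv {n : ℕ} (hn : finrank ℝ E = n + 1) {ι : Type*}
    [Fintype ι] (b : OrthonormalBasis ι ℝ E) (hu : ContDiffOn ℝ 1 u (ball 0 R))
    (hw : HarmonicOnNhd w (ball 0 R)) {r : ℝ} (hr : r ∈ Set.Ioo 0 R) :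
    r ^ n * sphericalPairing u (radialDeriv w) r r =
      r * ∫ x in ball 0 r, ∑ i, ⟪fderiv ℝ u x (b i), fderiv ℝ w x (b i)⟫ := by
  let g i x := ⟪u x, fderiv ℝ w x (b i)⟫
  have hg : ∀ i, ContDiffOn ℝ 1 (g i) (ball 0 R) := fun i ↦
    hu.inner ℝ ((hw.contDiffOn.fderiv_of_isOpen isOpen_ball (m := 1) le_rfl).clm_apply
      contDiffOn_const)
  have hDg : ∀ i, IntegrableOn (fun x ↦ fderiv ℝ (g i) x (b i)) (ball 0 r) := fun i ↦
    integrableOn_ball_of_continuousOn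
      (((hg i).continuousOn_fderiv_of_isOpen isOpen_ball le_rfl).clm_apply continuousOn_const) hr.2
  have hflux : ∀ i, Integrable (fun ω : sphere (0 : E) 1 ↦ g i (r • (ω : E)) * ⟪b i, ω⟫)
      volume.toSphere := fun i ↦
    integrable_toSphere_of_continuousOn (f := fun x ↦ g i (r • x) * ⟪b i, x⟫) <|
      ((hg i).continuousOn.comp (by fun_prop) fun ω hω ↦
        smul_mem_ball_of_mem_sphere ⟨by linarith [hr.1, hr.2], hr.2⟩ hω).mul (by fun_prop)
  have hradial : ∀ ω : E, r * ∑ i, g i (r • ω) * ⟪b i, ω⟫ = ⟪u (r • ω), radialDeriv w (r • ω)⟫ :=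
    fun ω ↦ by
      simp only [radialDeriv, map_smul, inner_smul_right]
      rw [← congrArg (fderiv ℝ w (r • ω)) (b.sum_repr' ω)]
      simp [g, inner_sum, inner_smul_right, mul_comm]
  calc r ^ n * sphericalPairing u (radialDeriv w) r r
      = r * ∑ i, r ^ n * ∫ ω : sphere (0 : E) 1, g i (r • (ω : E)) * ⟪b i, ω⟫ ∂volume.toSphere := by
        rw [← Finset.mul_sum, ← integral_finsetSum _ fun i _ ↦ hflux i, mul_left_comm,
          ← integral_const_mul]
        simp_rw [hradial, sphericalPairing]
    _ = r * ∫ x in ball 0 r, ∑ i, fderiv ℝ (g i) x (b i) := by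
        simp_rw [integral_finsetSum _ fun i _ ↦ hDg i, setIntegral_ball_fderiv hn (hg _) _ hr]
    _ = r * ∫ x in ball 0 r, ∑ i, ⟪fderiv ℝ u x (b i), fderiv ℝ w x (b i)⟫ := by
        congr 1
        refine setIntegral_congr_fun measurableSet_ball fun x hx ↦ ?_
        have hx' := ball_subset_ball hr.2.le hx
        exact sum_fderiv_inner_fderiv b ((hu.contDiffAt (isOpen_ball.mem_nhds hx')).differentiableAt
          one_ne_zero) (hw x hx')

theorem sphericalPairing_radialDeriv_left {n : ℕ} (hn : finrank ℝ E = n + 1)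
    (hu : HarmonicOnNhd u (ball 0 R)) (hw : HarmonicOnNhd w (ball 0 R)) {s t : ℝ}
    (hs : s ∈ Set.Ioo 0 R) (ht : t ∈ Set.Ioo 0 R) :
    sphericalPairing (radialDeriv u) w s t = sphericalPairing u (radialDeriv w) s t := by
  obtain ⟨ρ, hρ, hρs⟩ : ∃ ρ > 1, max s t * ρ ≤ R :=
    ⟨R / max s t, (one_lt_div (lt_max_of_lt_left hs.1)).2 (max_lt hs.2 ht.2),
      (mul_div_cancel₀ R (lt_max_of_lt_left hs.1).ne').le⟩
  have hdilate : ∀ {f : E → F} {c : ℝ}, HarmonicOnNhd f (ball 0 R) → 0 < c → c ≤ max s t →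
      HarmonicOnNhd (fun x ↦ f (c • x)) (ball 0 ρ) := fun {f c} hf hc hcst x hx ↦ by
    refine harmonicAt_comp_smul (hf _ ?_)
    rw [mem_ball_zero_iff] at hx ⊢
    rw [norm_smul, Real.norm_of_nonneg hc.le]
    exact (mul_lt_mul_of_pos_left hx hc).trans_le ((by gcongr : c * ρ ≤ _).trans hρs)
  have hU := hdilate hu hs.1 (le_max_left s t)
  have hW := hdilate hw ht.1 (le_max_right s t)
  have hgreen := pow_mul_sphericalPairing_radialDeriv hn (stdOrthonormalBasis ℝ E)
    (hU.contDiffOn.of_le one_le_two) hW ⟨one_pos, hρ⟩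
  have hgreen' := pow_mul_sphericalPairing_radialDeriv hn (stdOrthonormalBasis ℝ E)
    (hW.contDiffOn.of_le one_le_two) hU ⟨one_pos, hρ⟩
  simp_rw [real_inner_comm (fderiv ℝ (fun x ↦ u (s • x)) _ _), ← hgreen, sphericalPairing,
    radialDeriv_comp_smul, one_pow, one_mul, one_smul] at hgreen'
  simpa [sphericalPairing, real_inner_comm] using hgreen'

theorem integrable_toSphere_inner_smul (hu : ContinuousOn u (ball 0 R))
    (hw : ContinuousOn w (ball 0 R)) {s t : ℝ} (hs : s ∈ Set.Ioo 0 R) (ht : t ∈ Set.Ioo 0 R) :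
    Integrable (fun ω : sphere (0 : E) 1 ↦ ⟪u (s • (ω : E)), w (t • (ω : E))⟫) volume.toSphere := by
  have hdilate : ∀ {f : E → F} {c : ℝ}, ContinuousOn f (ball 0 R) → c ∈ Set.Ioo 0 R →
      ContinuousOn (fun x ↦ f (c • x)) (sphere 0 1) := fun hf hc ↦
    hf.comp (by fun_prop) fun _ hω ↦
      smul_mem_ball_of_mem_sphere ⟨by linarith [hc.1, hc.2], hc.2⟩ hω
  exact integrable_toSphere_of_continuousOn (f := fun x ↦ ⟪u (s • x), w (t • x)⟫)
    ((hdilate hu hs).inner (hdilate hw ht))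

theorem hasDerivAt_sphericalPairing (hu : ContDiffOn ℝ 1 u (ball 0 R))
    (hw : ContDiffOn ℝ 1 w (ball 0 R)) {a b : ℝ → ℝ} {t : ℝ} (ha : ContDiffAt ℝ 1 a t)
    (hb : ContDiffAt ℝ 1 b t) (hat : a t ∈ Set.Ioo 0 R) (hbt : b t ∈ Set.Ioo 0 R) :
    HasDerivAt (fun τ ↦ sphericalPairing u w (a τ) (b τ))
      (logDeriv a t * sphericalPairing (radialDeriv u) w (a t) (b t) +
        logDeriv b t * sphericalPairing u (radialDeriv w) (a t) (b t)) t := by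
  have hsmooth : ∀ {f : E → F} {c : ℝ → ℝ}, ContDiffOn ℝ 1 f (ball 0 R) → c t ∈ Set.Ioo 0 R →
      ∀ ω : sphere (0 : E) 1, ContDiffAt ℝ 1 f (c t • (ω : E)) := fun hf hct ω ↦
    hf.contDiffAt (isOpen_ball.mem_nhds (smul_mem_ball_of_mem_sphere
      ⟨by linarith [hct.1, hct.2], hct.2⟩ ω.2))
  have hray : ∀ {f : E → F} {c : ℝ → ℝ}, ContDiffOn ℝ 1 f (ball 0 R) → ContDiffAt ℝ 1 c t →
      c t ∈ Set.Ioo 0 R → ∀ ω : sphere (0 : E) 1,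
      ContDiffAt ℝ 1 (fun p : ℝ × E ↦ f (c p.1 • p.2)) (t, ω) := fun hf hc hct ω ↦
    (hsmooth hf hct ω).comp (t, (ω : E)) ((hc.comp (t, (ω : E)) contDiffAt_fst).smul contDiffAt_snd)
  have hrayDeriv : ∀ {f : E → F} {c : ℝ → ℝ}, ContDiffOn ℝ 1 f (ball 0 R) → ContDiffAt ℝ 1 c t →
      c t ∈ Set.Ioo 0 R → ∀ ω : sphere (0 : E) 1,
      HasDerivAt (fun τ ↦ f (c τ • (ω : E))) (logDeriv c t • radialDeriv f (c t • (ω : E))) t :=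
    fun hf hc hct ω ↦ hasDerivAt_comp_smul ((hsmooth hf hct ω).differentiableAt one_ne_zero)
      (hc.differentiableAt one_ne_zero) hct.1.ne'
  have hint_left := integrable_toSphere_inner_smul (continuousOn_radialDeriv hu) hw.continuousOn
    hat hbt
  have hint_right := integrable_toSphere_inner_smul hu.continuousOn (continuousOn_radialDeriv hw)
    hat hbt
  refine (hasDerivAt_integral_of_contDiffAt continuous_subtype_val
    (Φ := fun p : ℝ × E ↦ ⟪u (a p.1 • p.2), w (b p.1 • p.2)⟫)
    (fun ω ↦ (hray hu ha hat ω).inner ℝ (hray hw hb hbt ω)) fun ω ↦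
    (hrayDeriv hu ha hat ω).inner ℝ (hrayDeriv hw hb hbt ω)).congr_deriv ?_
  simp only [inner_smul_left, inner_smul_right, RCLike.conj_to_real]
  rw [integral_add (hint_right.const_mul _) (hint_left.const_mul _), integral_const_mul,
    integral_const_mul, add_comm]
  rfl

theorem sphericalPairing_eq_of_mul_eq {n : ℕ} (hn : finrank ℝ E = n + 1)
    (hu : HarmonicOnNhd u (ball 0 R)) (hw : HarmonicOnNhd w (ball 0 R)) {s t s' t' : ℝ}
    (hs : s ∈ Set.Ioo 0 R) (ht : t ∈ Set.Ioo 0 R) (hs' : s' ∈ Set.Ioo 0 R)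
    (ht' : t' ∈ Set.Ioo 0 R) (h : s * t = s' * t') :
    sphericalPairing u w s t = sphericalPairing u w s' t' := by
  have hpos : 0 < s * t := mul_pos hs.1 ht.1
  have hderiv : ∀ τ ∈ Set.Ioo (s * t / R) R,
      HasDerivAt (fun τ ↦ sphericalPairing u w τ (s * t / τ)) 0 τ := fun τ hτ ↦ by
    have hR : 0 < R := hs.1.trans hs.2
    have hτ₀ : 0 < τ := (div_pos hpos hR).trans hτ.1
    have hmem : s * t / τ ∈ Set.Ioo 0 R := ⟨by positivity, (div_lt_comm₀ hR hτ₀).1 hτ.1⟩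
    refine (hasDerivAt_sphericalPairing (a := fun τ ↦ τ) (b := fun τ ↦ s * t / τ)
      (hu.contDiffOn.of_le one_le_two) (hw.contDiffOn.of_le one_le_two) contDiffAt_id
      (contDiffAt_const.div contDiffAt_id hτ₀.ne') ⟨hτ₀, hτ.2⟩ hmem).congr_deriv ?_
    have hlog : logDeriv (fun τ ↦ s * t / τ) τ = -1 / τ := by
      simp [div_eq_mul_inv, logDeriv_const_mul _ _ hpos.ne', logDeriv_inv]
    rw [sphericalPairing_radialDeriv_left hn hu hw ⟨hτ₀, hτ.2⟩ hmem, hlog, logDeriv_id']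
    ring
  have hdom : ∀ {x y : ℝ}, x ∈ Set.Ioo 0 R → y ∈ Set.Ioo 0 R → x * y = s * t →
      x ∈ Set.Ioo (s * t / R) R ∧ s * t / x = y := fun {x y} hx hy hxy ↦
    ⟨⟨by rw [← hxy, div_lt_iff₀ (hx.1.trans hx.2)]; exact mul_lt_mul_of_pos_left hy.2 hx.1, hx.2⟩,
      by rw [← hxy, mul_div_cancel_left₀ y hx.1.ne']⟩
  have hconst := isOpen_Ioo.is_const_of_deriv_eq_zero isPreconnected_Ioo
    (fun τ hτ ↦ (hderiv τ hτ).differentiableAt.differentiableWithinAt)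
    (fun τ hτ ↦ (hderiv τ hτ).deriv) (hdom hs ht rfl).1 (hdom hs' ht' h.symm).1
  simpa only [(hdom hs ht rfl).2, (hdom hs' ht' h.symm).2] using hconst

theorem sphericalPairing_radialDeriv_eq_of_mul_eq {n : ℕ} (hn : finrank ℝ E = n + 1)
    (hu : HarmonicOnNhd u (ball 0 R)) (hw : HarmonicOnNhd w (ball 0 R)) {s t s' t' : ℝ}
    (hs : s ∈ Set.Ioo 0 R) (ht : t ∈ Set.Ioo 0 R) (hs' : s' ∈ Set.Ioo 0 R)
    (ht' : t' ∈ Set.Ioo 0 R) (h : s * t = s' * t') :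
    sphericalPairing u (radialDeriv w) s t = sphericalPairing u (radialDeriv w) s' t' := by
  have hderiv : ∀ {x y : ℝ}, x ∈ Set.Ioo 0 R → y ∈ Set.Ioo 0 R →
      HasDerivAt (fun τ ↦ sphericalPairing u w x (y * τ))
        (sphericalPairing u (radialDeriv w) x y) 1 := fun {x y} hx hy ↦ by
    have hy₁ : y * 1 ∈ Set.Ioo 0 R := by rwa [mul_one]
    refine (hasDerivAt_sphericalPairing (a := fun _ ↦ x) (b := fun τ ↦ y * τ)
      (hu.contDiffOn.of_le one_le_two) (hw.contDiffOn.of_le one_le_two) contDiffAt_const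
      (contDiffAt_const.mul contDiffAt_id) hx hy₁).congr_deriv ?_
    simp [logDeriv_const_mul _ _ hy.1.ne']
  have hdom : ∀ {y : ℝ}, y ∈ Set.Ioo 0 R → ∀ᶠ τ in 𝓝 1, y * τ ∈ Set.Ioo 0 R := fun {y} hy ↦
    (continuous_const_mul y).continuousAt.eventually_mem (isOpen_Ioo.mem_nhds (by rwa [mul_one]))
  refine (hderiv hs ht).unique ((hderiv hs' ht').congr_of_eventuallyEq ?_)
  filter_upwards [hdom ht, hdom ht'] with τ hτ hτ'
  exact sphericalPairing_eq_of_mul_eq hn hu hw hs hτ hs' hτ' (by rw [← mul_assoc, h, mul_assoc])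

theorem hasDerivAt_sphericalPairing_self {n : ℕ} (hn : finrank ℝ E = n + 1)
    (hu : HarmonicOnNhd u (ball 0 R)) {r : ℝ} (hr : r ∈ Set.Ioo 0 R) :
    HasDerivAt (fun r ↦ sphericalPairing u u r r)
      (2 / r * sphericalPairing u (radialDeriv u) r r) r := by
  have hu₁ := hu.contDiffOn.of_le one_le_two
  refine (hasDerivAt_sphericalPairing (a := fun r ↦ r) (b := fun r ↦ r) hu₁ hu₁ contDiffAt_id
    contDiffAt_id hr hr).congr_deriv ?_
  rw [sphericalPairing_radialDeriv_left hn hu hu hr hr, logDeriv_id']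
  ring

-- Keeping the second radius fixed avoids differentiating `radialDeriv u` twice.
theorem hasDerivAt_sphericalPairing_radialDeriv {n : ℕ} (hn : finrank ℝ E = n + 1)
    (hu : HarmonicOnNhd u (ball 0 R)) {r : ℝ} (hr : r ∈ Set.Ioo 0 R) :
    HasDerivAt (fun r ↦ sphericalPairing u (radialDeriv u) r r)
      (2 / r * sphericalPairing (radialDeriv u) (radialDeriv u) r r) r := by
  have hr₀ := hr.1.ne'
  have hr₁ : r ^ 2 / r ∈ Set.Ioo 0 R := by rwa [pow_two, mul_div_cancel_left₀ r hr₀]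
  have hdom : ∀ᶠ τ in 𝓝 r, τ ^ 2 / r ∈ Set.Ioo 0 R :=
    ((continuous_pow 2).div_const r).continuousAt.eventually_mem (isOpen_Ioo.mem_nhds hr₁)
  have hderiv := hasDerivAt_sphericalPairing (a := fun τ ↦ τ ^ 2 / r) (b := fun _ ↦ r)
    (hu.contDiffOn.of_le one_le_two) (contDiffOn_radialDeriv hu.contDiffOn)
    ((contDiffAt_id.pow 2).div_const r) contDiffAt_const hr₁ hr
  have hlog : logDeriv (fun τ ↦ τ ^ 2 / r) r = 2 / r := by
    simp [div_eq_mul_inv, logDeriv_mul_const _ _ (inv_ne_zero hr₀), logDeriv_pow]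
  simp only [hlog, logDeriv_const, Pi.zero_apply, zero_mul, add_zero] at hderiv
  rw [pow_two, mul_div_cancel_left₀ r hr₀] at hderiv
  refine hderiv.congr_of_eventuallyEq ?_
  filter_upwards [hdom, isOpen_Ioo.mem_nhds hr] with τ hτ hτ'
  exact sphericalPairing_radialDeriv_eq_of_mul_eq hn hu hu hτ' hτ' hτ hr (by field_simp)

theorem sphericalPairing_sq_le (hu : ContinuousOn u (ball 0 R)) (hw : ContinuousOn w (ball 0 R))
    {s t : ℝ} (hs : s ∈ Set.Ioo 0 R) (ht : t ∈ Set.Ioo 0 R) :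
    sphericalPairing u w s t ^ 2 ≤ sphericalPairing u u s s * sphericalPairing w w t t := by
  have huu := integrable_toSphere_inner_smul hu hu hs hs
  have huw := integrable_toSphere_inner_smul hu hw hs ht
  have hww := integrable_toSphere_inner_smul hw hw ht ht
  have hexpand : ∀ τ : ℝ, ∫ ω : sphere (0 : E) 1,
      ⟪τ • u (s • (ω : E)) + w (t • (ω : E)), τ • u (s • (ω : E)) + w (t • (ω : E))⟫
        ∂volume.toSphere =
      sphericalPairing u u s s * (τ * τ) + 2 * sphericalPairing u w s t * τ +
        sphericalPairing w w t t := fun τ ↦ by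
    simp only [sphericalPairing]
    rw [← integral_mul_const, ← integral_const_mul, ← integral_mul_const,
      ← integral_add (huu.mul_const _) ((huw.const_mul 2).mul_const τ),
      ← integral_add ((huu.mul_const _).fun_add ((huw.const_mul 2).mul_const τ)) hww]
    congr with ω
    simp only [inner_add_left, inner_add_right, real_inner_smul_left, real_inner_smul_right,
      real_inner_comm (u (s • (ω : E))) (w (t • (ω : E)))]
    ring
  have hdiscrim := discrim_le_zero fun τ : ℝ ↦
    (integral_nonneg fun _ ↦ real_inner_self_nonneg).trans_eq (hexpand τ)
  rw [discrim] at hdiscrim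
  linarith

-- Cauchy–Schwarz at radii with product `s ^ 2` bounds the value at `s` by the value at `r`.
theorem eventually_sphericalPairing_self_eq_zero {n : ℕ} (hn : finrank ℝ E = n + 1)
    (hu : HarmonicOnNhd u (ball 0 R)) {r : ℝ} (hr : r ∈ Set.Ioo 0 R)
    (hzero : sphericalPairing u u r r = 0) : ∀ᶠ s in 𝓝 r, sphericalPairing u u s s = 0 := by
  have hr_sq : r ^ 2 / r ∈ Set.Ioo 0 R := by rwa [pow_two, mul_div_cancel_left₀ r hr.1.ne']
  have hnear : ∀ᶠ s in 𝓝 r, s ^ 2 / r ∈ Set.Ioo 0 R :=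
    ((continuous_pow 2).div_const r).continuousAt.eventually_mem (isOpen_Ioo.mem_nhds hr_sq)
  filter_upwards [hnear, isOpen_Ioo.mem_nhds hr] with s hs_sq hs
  have hCS := sphericalPairing_sq_le hu.contDiffOn.continuousOn hu.contDiffOn.continuousOn hr hs_sq
  rw [sphericalPairing_eq_of_mul_eq hn hu hu hr hs_sq hs hs
    (by rw [mul_div_cancel₀ _ hr.1.ne', pow_two]), hzero, zero_mul] at hCS
  exact pow_eq_zero_iff two_ne_zero |>.1 (hCS.antisymm (sq_nonneg _))

theorem sphericalPairing_self_pos_of_pos {n : ℕ} (hn : finrank ℝ E = n + 1)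
    (hu : HarmonicOnNhd u (ball 0 R)) {r₀ r : ℝ} (hr₀ : r₀ ∈ Set.Ioo 0 R) (hr : r ∈ Set.Ioo 0 R)
    (hpos : 0 < sphericalPairing u u r₀ r₀) : 0 < sphericalPairing u u r r := by
  set A : ℝ → ℝ := fun r ↦ sphericalPairing u u r r
  have hnonneg : ∀ s, 0 ≤ A s := fun s ↦ integral_nonneg fun _ ↦ real_inner_self_nonneg
  have hcont : ContinuousOn A (Set.Ioo 0 R) := fun s hs ↦
    (hasDerivAt_sphericalPairing_self hn hu hs).continuousAt.continuousWithinAt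
  have hopen_zero : IsOpen (Set.Ioo 0 R ∩ {s | A s = 0}) := isOpen_iff_mem_nhds.2 fun s hs ↦
    inter_mem (isOpen_Ioo.mem_nhds hs.1)
      (eventually_sphericalPairing_self_eq_zero hn hu hs.1 hs.2)
  have hsubset := isPreconnected_Ioo.subset_left_of_subset_union
    (hcont.isOpen_inter_preimage isOpen_Ioo isOpen_Ioi) hopen_zero
    (Set.disjoint_left.2 fun s hs hs' ↦ (Set.mem_Ioi.1 hs.2).ne' hs'.2)
    (fun s hs ↦ (hnonneg s).lt_or_eq.imp (⟨hs, ·⟩) (⟨hs, ·.symm⟩)) ⟨r₀, hr₀, hr₀, hpos⟩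
  exact (hsubset hr).2

theorem exists_sphericalPairing_self_pos [Nontrivial E] (hu : ContinuousOn u (ball 0 R))
    (hne : ∃ x ∈ ball 0 R, u x ≠ 0) : ∃ r ∈ Set.Ioo 0 R, 0 < sphericalPairing u u r r := by
  obtain ⟨x, ⟨hx, hux⟩, hx₀⟩ := (dense_compl_singleton (0 : E)).inter_open_nonempty _
    (hu.isOpen_inter_preimage isOpen_ball isOpen_compl_singleton) hne
  have hr : ‖x‖ ∈ Set.Ioo 0 R := ⟨norm_pos_iff.2 hx₀, mem_ball_zero_iff.1 hx⟩
  refine ⟨‖x‖, hr, Continuous.integral_pos_of_hasCompactSupport_nonneg_nonzero ?_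
    (.of_compactSpace _) (fun _ ↦ real_inner_self_nonneg)
    (x := ⟨‖x‖⁻¹ • x, by simp [norm_smul, inv_mul_cancel₀ hr.1.ne']⟩) ?_⟩
  · have hcont : Continuous fun ω : sphere (0 : E) 1 ↦ u (‖x‖ • (ω : E)) :=
      hu.comp_continuous (by fun_prop) fun ω ↦
        smul_mem_ball_of_mem_sphere ⟨by linarith [hr.1, hr.2], hr.2⟩ ω.2
    exact hcont.inner hcont
  · simpa [smul_smul, hr.1.ne'] using hux

end SphericalPairing

theorem monotoneOn_div_of_sq_le {R : ℝ} {A P W : ℝ → ℝ}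
    (hA : ∀ r ∈ Set.Ioo 0 R, HasDerivAt A (2 / r * P r) r)
    (hP : ∀ r ∈ Set.Ioo 0 R, HasDerivAt P (2 / r * W r) r)
    (hpos : ∀ r ∈ Set.Ioo 0 R, 0 < A r) (hsq : ∀ r ∈ Set.Ioo 0 R, P r ^ 2 ≤ A r * W r) :
    MonotoneOn (fun r ↦ P r / A r) (Set.Ioo 0 R) := by
  have hderiv : ∀ r ∈ Set.Ioo 0 R,
      HasDerivAt (fun r ↦ P r / A r) (2 / r * (A r * W r - P r ^ 2) / A r ^ 2) r := fun r hr ↦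
    ((hP r hr).fun_div (hA r hr) (hpos r hr).ne').congr_deriv (by ring)
  refine monotoneOn_of_hasDerivWithinAt_nonneg (convex_Ioo 0 R)
    (f' := fun r ↦ 2 / r * (A r * W r - P r ^ 2) / A r ^ 2)
    (fun r hr ↦ (hderiv r hr).continuousAt.continuousWithinAt) (fun r hr ↦ ?_) fun r hr ↦ ?_
  all_goals rw [interior_Ioo] at hr
  · exact (hderiv r hr).hasDerivWithinAt
  · have := sub_nonneg.2 (hsq r hr)
    have := hr.1
    positivity

section IsUniformOnSphere

variable {E : Type*} [NormedAddCommGroup E] [InnerProductSpace ℝ E] [MeasurableSpace E]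

/-- Measures on `E` that behave like the surface measure of the unit sphere: they are carried by
the sphere and invariant under all linear isometries. Up to a constant there is only one. -/
structure IsUniformOnSphere (μ : Measure E) : Prop where
  compl_sphere : μ (sphere 0 1)ᶜ = 0
  map_eq (L : E ≃ₗᵢ[ℝ] E) : μ.map L = μ

variable [BorelSpace E] {μ ν : Measure E}

theorem IsUniformOnSphere.measure_closedBall_eq (hμ : IsUniformOnSphere μ) {x y : E}
    (hxy : ‖x‖ = ‖y‖) (r : ℝ) : μ (closedBall x r) = μ (closedBall y r) := by
  set L := (ℝ ∙ (x - y))ᗮ.reflection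
  have hL : L.symm y = x := by rw [← Submodule.reflection_sub hxy, L.symm_apply_apply]
  rw [← hL, ← L.preimage_closedBall, ← Measure.map_apply L.continuous.measurable
    measurableSet_closedBall, hμ.map_eq L]

theorem IsUniformOnSphere.add (hμ : IsUniformOnSphere μ) (hν : IsUniformOnSphere ν) :
    IsUniformOnSphere (μ + ν) where
  compl_sphere := by simp [hμ.compl_sphere, hν.compl_sphere]
  map_eq L := by rw [Measure.map_add _ _ L.continuous.measurable, hμ.map_eq, hν.map_eq]

variable [FiniteDimensional ℝ E] [IsFiniteMeasure μ] [IsFiniteMeasure ν]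

-- By Besicovitch differentiation the density is a limit of ratios of measures of balls, and
-- invariance makes these ratios the same at all points of the sphere.
theorem IsUniformOnSphere.exists_eq_smul_of_absolutelyContinuous (hμ : IsUniformOnSphere μ)
    (hν : IsUniformOnSphere ν) (hμν : μ ≪ ν) : ∃ c : ENNReal, c ≠ ⊤ ∧ μ = c • ν := by
  obtain rfl | hν₀ := eq_or_ne ν 0
  · exact ⟨0, ENNReal.zero_ne_top, by simpa using hμν⟩
  have hlim : ∀ᵐ x ∂ν, x ∈ sphere (0 : E) 1 ∧
      Tendsto (fun r ↦ μ (closedBall x r) / ν (closedBall x r)) (𝓝[>] 0) (𝓝 (μ.rnDeriv ν x)) :=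
    (show ∀ᵐ x ∂ν, x ∈ sphere (0 : E) 1 from hν.compl_sphere).and
      (Besicovitch.ae_tendsto_rnDeriv μ ν)
  have : (ae ν).NeBot := ae_neBot.2 hν₀
  obtain ⟨x₀, ⟨hx₀, hlim₀⟩, hfin⟩ := (hlim.and (μ.rnDeriv_lt_top ν)).exists
  have hconst : μ.rnDeriv ν =ᵐ[ν] fun _ ↦ μ.rnDeriv ν x₀ := by
    filter_upwards [hlim] with x ⟨hx, hlimx⟩
    have hnorm : ‖x₀‖ = ‖x‖ := by
      rw [mem_sphere_zero_iff_norm.1 hx₀, mem_sphere_zero_iff_norm.1 hx]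
    refine tendsto_nhds_unique hlimx (hlim₀.congr fun r ↦ ?_)
    rw [hμ.measure_closedBall_eq hnorm, hν.measure_closedBall_eq hnorm]
  refine ⟨μ.rnDeriv ν x₀, hfin.ne, ?_⟩
  rw [← withDensity_const, ← withDensity_congr_ae hconst, Measure.withDensity_rnDeriv_eq μ ν hμν]

theorem IsUniformOnSphere.exists_eq_smul (hμ : IsUniformOnSphere μ) (hν : IsUniformOnSphere ν)
    (hν₀ : ν ≠ 0) : ∃ c : ENNReal, c ≠ ⊤ ∧ μ = c • ν := by
  obtain ⟨a, ha, hμ_eq⟩ := hμ.exists_eq_smul_of_absolutelyContinuous (hμ.add hν)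
    (Measure.le_add_right le_rfl).absolutelyContinuous
  obtain ⟨b, hb, hν_eq⟩ := hν.exists_eq_smul_of_absolutelyContinuous (hμ.add hν)
    (Measure.le_add_left le_rfl).absolutelyContinuous
  have hb₀ : b ≠ 0 := by
    rintro rfl
    exact hν₀ (by simpa using hν_eq)
  refine ⟨a / b, ENNReal.div_ne_top ha hb₀, ?_⟩
  calc μ = a • (μ + ν) := hμ_eq
    _ = (a / b) • b • (μ + ν) := by rw [smul_smul, ENNReal.div_mul_cancel hb₀ hb]
    _ = (a / b) • ν := by rw [← hν_eq]

end IsUniformOnSphere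

section HausdorffMeasure

theorem setIntegral_sphere_hausdorffMeasure {E G : Type*} [NormedAddCommGroup E]
    [NormedSpace ℝ E] [MeasurableSpace E] [BorelSpace E] [NormedAddCommGroup G] [NormedSpace ℝ G]
    {d : ℝ} (hd : 0 ≤ d) (f : E → G) {r : ℝ} (hr : 0 < r) :
    ∫ x in sphere 0 r, f x ∂μH[d] = r ^ d • ∫ x in sphere 0 1, f (r • x) ∂μH[d] := by
  have hmap := map_homothety_hausdorffMeasure hd (0 : E) hr.ne'
  have hhomothety : ⇑(AffineMap.homothety (0 : E) r) = (r • ·) := by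
    ext x
    simp [AffineMap.homothety_apply]
  have hpreimage : (r • ·) ⁻¹' sphere (0 : E) r = sphere 0 1 := by
    ext x
    simp [norm_smul, abs_of_pos hr, hr.ne']
  have hscale : ∫ x in sphere 0 r, f x ∂μH[d].map (r • ·) =
      ∫ x in (r • ·) ⁻¹' sphere 0 r, f (r • x) ∂μH[d] :=
    (Homeomorph.smulOfNeZero r hr.ne').measurableEmbedding.setIntegral_map f (sphere 0 r)
  rw [hhomothety] at hmap
  rw [hmap, hpreimage, Measure.restrict_smul, integral_smul_nnreal_measure] at hscale
  rw [← hscale, NNReal.smul_def, smul_smul]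
  have hcancel : r ^ d * r⁻¹ ^ d = 1 := by
    rw [← Real.mul_rpow hr.le (inv_nonneg.2 hr.le), mul_inv_cancel₀ hr.ne', Real.one_rpow]
  simp [Real.norm_of_nonneg hr.le, hcancel]

variable {E : Type*} [NormedAddCommGroup E] [InnerProductSpace ℝ E]

theorem sphere_inter_halfspace_subset_image_stereoInvFun {v : E} (hv : ‖v‖ = 1) :
    sphere 0 1 ∩ {x | ⟪v, x⟫ ≤ 0} ⊆
      (fun w : (ℝ ∙ v)ᗮ ↦ stereoInvFunAux v w) '' closedBall 0 2 := by
  rintro x ⟨hx, hvx⟩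
  rw [Set.mem_ofPred_eq] at hvx
  have hxv : x ≠ v := by
    rintro rfl
    rw [real_inner_self_eq_norm_sq, hv] at hvx
    linarith
  refine ⟨stereoToFun v x, ?_, congrArg Subtype.val (stereo_left_inv hv (x := ⟨x, hx⟩) hxv)⟩
  have hproj : ‖(ℝ ∙ v)ᗮ.orthogonalProjectionOnto x‖ ≤ 1 :=
    (Submodule.norm_orthogonalProjectionOnto_apply_le _ x).trans_eq (mem_sphere_zero_iff_norm.1 hx)
  have hfactor : 2 / (1 - ⟪v, x⟫) ≤ 2 := div_le_self zero_le_two (by linarith)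
  rw [mem_closedBall_zero_iff, stereoToFun_apply, norm_smul, innerSL_apply_apply,
    Real.norm_of_nonneg (div_nonneg zero_le_two (by linarith))]
  exact (mul_le_mul hfactor hproj (norm_nonneg _) zero_le_two).trans_eq (mul_one 2)

theorem closedBall_subset_orthogonalProjectionOnto_image_sphere {v : E} (hv : ‖v‖ = 1) :
    closedBall 0 1 ⊆ (ℝ ∙ v)ᗮ.orthogonalProjectionOnto '' sphere 0 1 := by
  intro w hw
  rw [mem_closedBall_zero_iff] at hw
  have hvw : ⟪(w : E), v⟫ = 0 := Submodule.mem_orthogonal_singleton_iff_inner_left.1 w.2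
  refine ⟨w + √(1 - ‖w‖ ^ 2) • v, ?_, ?_⟩
  · have hsq : 0 ≤ 1 - ‖w‖ ^ 2 := by nlinarith [norm_nonneg w]
    rw [mem_sphere_zero_iff_norm, ← pow_eq_one_iff_of_nonneg (norm_nonneg _) two_ne_zero,
      norm_add_sq_real, real_inner_smul_right, hvw, norm_smul, hv, Real.norm_eq_abs, mul_one,
      sq_abs, Real.sq_sqrt hsq, Submodule.coe_norm]
    ring
  · simp

variable [MeasurableSpace E] [BorelSpace E]

theorem isUniformOnSphere_hausdorffMeasure_restrict (d : ℝ) :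
    IsUniformOnSphere ((μH[d] : Measure E).restrict (sphere 0 1)) where
  compl_sphere := by simp [Measure.restrict_apply isClosed_sphere.measurableSet.compl]
  map_eq L := by
    have hpreserve := (L.toIsometryEquiv.measurePreserving_hausdorffMeasure d).restrict_preimage
      (isClosed_sphere (x := (0 : E)) (ε := 1)).measurableSet
    have hpreimage : L.toIsometryEquiv ⁻¹' sphere 0 1 = sphere 0 1 := by ext; simp
    rw [hpreimage] at hpreserve
    exact hpreserve.map_eq

variable [FiniteDimensional ℝ E]

theorem isAddHaarMeasure_hausdorffMeasure_orthogonal {n : ℕ} (hn : finrank ℝ E = n + 1) {v : E}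
    (hv : v ≠ 0) : (μH[n] : Measure (ℝ ∙ v)ᗮ).IsAddHaarMeasure := by
  have : Fact (finrank ℝ E = n + 1) := ⟨hn⟩
  rw [← Submodule.finrank_orthogonal_span_singleton (𝕜 := ℝ) (n := n) hv]
  infer_instance

theorem hausdorffMeasure_sphere_lt_top {n : ℕ} (hn : finrank ℝ E = n + 1) :
    μH[n] (sphere (0 : E) 1) < ⊤ := by
  have : Nontrivial E := nontrivial_of_finrank_pos (R := ℝ) (by omega)
  have hhalf : ∀ v : E, ‖v‖ = 1 → μH[n] (sphere 0 1 ∩ {x : E | ⟪v, x⟫ ≤ 0}) < ⊤ := fun v hv ↦ by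
    have hv₀ : v ≠ 0 := norm_ne_zero_iff.1 (by simp [hv])
    have := isAddHaarMeasure_hausdorffMeasure_orthogonal hn hv₀
    obtain ⟨C, hC⟩ := (contDiff_stereoInvFunAux (v := v) (m := 1)).comp
      (ℝ ∙ v)ᗮ.subtypeL.contDiff |>.contDiffOn.exists_lipschitzOnWith one_ne_zero
      (convex_closedBall 0 2) (isCompact_closedBall 0 2)
    calc μH[n] (sphere 0 1 ∩ {x : E | ⟪v, x⟫ ≤ 0})
      _ ≤ μH[n] ((fun w : (ℝ ∙ v)ᗮ ↦ stereoInvFunAux v w) '' closedBall 0 2) :=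
        measure_mono (sphere_inter_halfspace_subset_image_stereoInvFun hv)
      _ ≤ C ^ (n : ℝ) * μH[n] (closedBall (0 : (ℝ ∙ v)ᗮ) 2) :=
        hC.hausdorffMeasure_image_le n.cast_nonneg
      _ < ⊤ := ENNReal.mul_lt_top (by simp) measure_closedBall_lt_top
  obtain ⟨v, hv⟩ := exists_norm_eq E zero_le_one
  refine (measure_mono fun x hx ↦ ?_).trans_lt
    (measure_union_lt_top (hhalf v hv) (hhalf (-v) (by rwa [norm_neg])))
  simp only [← Set.inter_union_distrib_left, Set.mem_inter_iff, Set.mem_union, Set.mem_ofPred_eq,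
    inner_neg_left, neg_nonpos]
  exact ⟨hx, le_total _ _⟩

theorem hausdorffMeasure_sphere_pos {n : ℕ} (hn : finrank ℝ E = n + 1) :
    0 < μH[n] (sphere (0 : E) 1) := by
  have : Nontrivial E := nontrivial_of_finrank_pos (R := ℝ) (by omega)
  obtain ⟨v, hv⟩ := exists_norm_eq E zero_le_one
  have hv₀ : v ≠ 0 := norm_ne_zero_iff.1 (by simp [hv])
  have := isAddHaarMeasure_hausdorffMeasure_orthogonal hn hv₀
  calc 0 < μH[n] (closedBall (0 : (ℝ ∙ v)ᗮ) 1) := measure_closedBall_pos _ _ one_pos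
    _ ≤ μH[n] ((ℝ ∙ v)ᗮ.orthogonalProjectionOnto '' sphere 0 1) :=
      measure_mono (closedBall_subset_orthogonalProjectionOnto_image_sphere hv)
    _ ≤ μH[n] (sphere (0 : E) 1) := hausdorffMeasure_orthogonalProjectionOnto_le _ _ _ n.cast_nonneg

theorem isUniformOnSphere_toSphere_map_coe :
    IsUniformOnSphere ((volume : Measure E).toSphere.map ((↑) : sphere (0 : E) 1 → E)) where
  compl_sphere := by
    simp [Measure.map_apply measurable_subtype_coe isClosed_sphere.measurableSet.compl]
  map_eq L := (measurePreserving_toSphere_map_coe L L.measurePreserving).map_eq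

theorem exists_hausdorffMeasure_restrict_sphere_eq_smul {n : ℕ} (hn : finrank ℝ E = n + 1) :
    ∃ c : ENNReal, c ≠ 0 ∧ c ≠ ⊤ ∧
      (μH[n] : Measure E).restrict (sphere 0 1) = c • (volume : Measure E).toSphere.map (↑) := by
  have : Nontrivial E := nontrivial_of_finrank_pos (R := ℝ) (by omega)
  have : IsFiniteMeasure ((μH[n] : Measure E).restrict (sphere 0 1)) :=
    ⟨by simpa using hausdorffMeasure_sphere_lt_top hn⟩
  have hne : (volume : Measure E).toSphere.map ((↑) : sphere (0 : E) 1 → E) ≠ 0 := by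
    rw [Ne, Measure.map_eq_zero_iff measurable_subtype_coe.aemeasurable,
      Measure.toSphere_eq_zero_iff, not_subsingleton_iff_nontrivial]
    infer_instance
  obtain ⟨c, hc, h⟩ := (isUniformOnSphere_hausdorffMeasure_restrict n).exists_eq_smul
    isUniformOnSphere_toSphere_map_coe hne
  refine ⟨c, ?_, hc, h⟩
  rintro rfl
  rw [zero_smul, Measure.restrict_eq_zero] at h
  exact (hausdorffMeasure_sphere_pos hn).ne' h

theorem exists_setIntegral_sphere_hausdorffMeasure_eq {n : ℕ} (hn : finrank ℝ E = n + 1) :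
    ∃ c : ℝ, 0 < c ∧ ∀ (f : E → ℝ) {r : ℝ}, 0 < r → ∫ x in sphere 0 r, f x ∂μH[n] =
      c * (r ^ n * ∫ ω : sphere (0 : E) 1, f (r • (ω : E)) ∂volume.toSphere) := by
  obtain ⟨c, hc₀, hc, h⟩ := exists_hausdorffMeasure_restrict_sphere_eq_smul hn
  refine ⟨c.toReal, ENNReal.toReal_pos hc₀ hc, fun f r hr ↦ ?_⟩
  rw [setIntegral_sphere_hausdorffMeasure n.cast_nonneg f hr, h, integral_smul_measure,
    (MeasurableEmbedding.subtype_coe isClosed_sphere.measurableSet).integral_map, Real.rpow_natCast,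
    smul_eq_mul, smul_eq_mul, mul_left_comm]

end HausdorffMeasure

section HarmonicField

theorem clm_fderiv_apply_eq_zero {E F G : Type*} [NormedAddCommGroup E] [NormedSpace ℝ E]
    [NormedAddCommGroup F] [NormedSpace ℝ F] [NormedAddCommGroup G] [NormedSpace ℝ G]
    (Λ : F →L[ℝ] G) {f : E → F} {x : E} (hf : DifferentiableAt ℝ f x)
    (h : ∀ᶠ y in 𝓝 x, Λ (f y) = 0) (w : E) : Λ (fderiv ℝ f x w) = 0 := by
  have hcomp := (Λ.hasFDerivAt.comp x hf.hasFDerivAt).congr_of_eventuallyEq (f₁ := 0) (h.mono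
    fun _ hy ↦ hy.symm)
  simpa using DFunLike.congr_fun (hcomp.unique (hasFDerivAt_const 0 x)) w

variable {E : Type*} [NormedAddCommGroup E] [InnerProductSpace ℝ E] [FiniteDimensional ℝ E]

-- Symmetry of `D²v` in its two arguments together with symmetry of `Dv` makes `⟪D²v(·, ·), ·⟫`
-- totally symmetric, so the Laplacian is the gradient of the divergence.
theorem laplacian_eq_zero_of_symmetric_of_trace_eq_zero {v : E → E} {x : E}
    (hv : ContDiffAt ℝ 2 v x) (hsymm : ∀ᶠ y in 𝓝 x, (fderiv ℝ v y).IsSymmetric)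
    (htrace : ∀ᶠ y in 𝓝 x, LinearMap.trace ℝ E (fderiv ℝ v y).toLinearMap = 0) :
    Δ v x = 0 := by
  set b := stdOrthonormalBasis ℝ E
  have hdiff : DifferentiableAt ℝ (fderiv ℝ v) x :=
    (hv.fderiv_right (m := 1) le_rfl).differentiableAt one_ne_zero
  have hswap : ∀ u w, fderiv ℝ (fderiv ℝ v) x u w = fderiv ℝ (fderiv ℝ v) x w u :=
    hv.isSymmSndFDerivAt (by simp)
  have hsymm' : ∀ u w z,
      ⟪fderiv ℝ (fderiv ℝ v) x u w, z⟫ = ⟪fderiv ℝ (fderiv ℝ v) x u z, w⟫ := fun u w z ↦ by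
    have := clm_fderiv_apply_eq_zero ((innerSL ℝ z).comp (ContinuousLinearMap.apply ℝ E w) -
      (innerSL ℝ w).comp (ContinuousLinearMap.apply ℝ E z)) hdiff (hsymm.mono fun y hy ↦ by
        simpa [sub_eq_zero, real_inner_comm] using hy w z) u
    simpa [sub_eq_zero, real_inner_comm] using this
  have htrace' : ∀ u, ∑ i, ⟪fderiv ℝ (fderiv ℝ v) x u (b i), b i⟫ = 0 := fun u ↦ by
    have := clm_fderiv_apply_eq_zero
      (∑ i, (innerSL ℝ (b i)).comp (ContinuousLinearMap.apply ℝ E (b i))) hdiff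
      (htrace.mono fun y hy ↦ by simpa [LinearMap.trace_eq_sum_inner _ b] using hy) u
    simpa [real_inner_comm] using this
  refine ext_inner_right ℝ fun w ↦ ?_
  calc ⟪Δ v x, w⟫
    _ = ∑ i, ⟪fderiv ℝ (fderiv ℝ v) x (b i) (b i), w⟫ := by
      rw [laplacian_eq_iteratedFDeriv_stdOrthonormalBasis]
      simp [iteratedFDeriv_two_apply, sum_inner, b]
    _ = ∑ i, ⟪fderiv ℝ (fderiv ℝ v) x w (b i), b i⟫ := by simp only [hsymm' _ _ w, hswap w]
    _ = ⟪0, w⟫ := by rw [htrace', inner_zero_left]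

theorem IsHarmonicField.harmonicOnNhd {Ω : Set E3} {v : E3 → E3} (hv : IsHarmonicField Ω v)
    (hΩ : IsOpen Ω) : HarmonicOnNhd v Ω := fun x hx ↦ by
  have hsmooth : ∀ y ∈ Ω, ContDiffAt ℝ 2 v y := fun y hy ↦
    (hv.1.contDiffAt (hΩ.mem_nhds hy)).of_le (WithTop.coe_le_coe.2 (le_top : (2 : ℕ∞) ≤ ⊤))
  refine ⟨hsmooth x hx, ?_⟩
  filter_upwards [hΩ.mem_nhds hx] with y hy
  refine laplacian_eq_zero_of_symmetric_of_trace_eq_zero (hsmooth y hy) ?_ ?_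
  all_goals filter_upwards [hΩ.mem_nhds hy] with z hz
  · exact fun u w ↦ ((hv.2 z hz).1 u w).trans (real_inner_comm _ _)
  · exact (hv.2 z hz).2

end HarmonicField

theorem frequency_monotone_general {E F : Type*} [NormedAddCommGroup E] [InnerProductSpace ℝ E]
    [FiniteDimensional ℝ E] [MeasurableSpace E] [BorelSpace E] [NormedAddCommGroup F]
    [InnerProductSpace ℝ F] {n : ℕ} (hn : finrank ℝ E = n + 1) {ι : Type*} [Fintype ι]
    (b : OrthonormalBasis ι ℝ E) {R : ℝ} {u : E → F} (hu : HarmonicOnNhd u (ball 0 R))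
    (hne : ¬ ∀ x ∈ ball 0 R, u x = 0) :
    (∀ r ∈ Set.Ioo 0 R, 0 < ∫ x in sphere 0 r, ‖u x‖ ^ 2 ∂μH[n]) ∧
      MonotoneOn (fun r ↦ r * (∫ x in ball 0 r, ∑ i, ‖fderiv ℝ u x (b i)‖ ^ 2) /
        ∫ x in sphere 0 r, ‖u x‖ ^ 2 ∂μH[n]) (Set.Ioo 0 R) := by
  have : Nontrivial E := nontrivial_of_finrank_pos (R := ℝ) (by omega)
  have hcont := hu.contDiffOn.continuousOn
  obtain ⟨r₀, hr₀, hpos₀⟩ := exists_sphericalPairing_self_pos hcont (by simpa using hne)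
  have hpos : ∀ r ∈ Set.Ioo 0 R, 0 < sphericalPairing u u r r := fun r hr ↦
    sphericalPairing_self_pos_of_pos hn hu hr₀ hr hpos₀
  obtain ⟨c, hc, hsphere⟩ := exists_setIntegral_sphere_hausdorffMeasure_eq hn
  have hheight : ∀ r ∈ Set.Ioo 0 R,
      ∫ x in sphere 0 r, ‖u x‖ ^ 2 ∂μH[n] = c * (r ^ n * sphericalPairing u u r r) := fun r hr ↦ by
    simp only [hsphere _ hr.1, sphericalPairing, real_inner_self_eq_norm_sq]
  have henergy : ∀ r ∈ Set.Ioo 0 R, r * ∫ x in ball 0 r, ∑ i, ‖fderiv ℝ u x (b i)‖ ^ 2 =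
      r ^ n * sphericalPairing u (radialDeriv u) r r := fun r hr ↦ by
    simp only [pow_mul_sphericalPairing_radialDeriv hn b (hu.contDiffOn.of_le one_le_two) hu hr,
      real_inner_self_eq_norm_sq]
  have hmono := monotoneOn_div_of_sq_le (fun r ↦ hasDerivAt_sphericalPairing_self hn hu)
    (fun r ↦ hasDerivAt_sphericalPairing_radialDeriv hn hu) hpos fun r hr ↦
    sphericalPairing_sq_le hcont (continuousOn_radialDeriv (hu.contDiffOn.of_le one_le_two)) hr hr
  have hmono_c := (monotone_mul_left_of_nonneg (inv_nonneg.2 hc.le)).comp_monotoneOn hmono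
  refine ⟨fun r hr ↦ ?_, hmono_c.congr fun r hr ↦ ?_⟩
  · rw [hheight r hr]
    exact mul_pos hc (mul_pos (pow_pos hr.1 n) (hpos r hr))
  · simp only [hheight r hr, henergy r hr, Function.comp_apply]
    rw [mul_left_comm, mul_div_mul_left _ _ (pow_pos hr.1 n).ne', div_mul_eq_div_div_swap,
      div_eq_inv_mul _ c]

/-- Almgren frequency monotonicity for harmonic fields (Item c) of the fourth bullet of
Proposition 7.1, Euclidean case): `h > 0` on `(0, r₀)` and `N(r) = r·H(r)/h(r)` is
nondecreasing. -/
theorem frequency_monotone (r₀ : ℝ) (hr₀ : 0 < r₀) (v : E3 → E3)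
    (hv : IsHarmonicField (Metric.ball (0 : E3) r₀) v)
    (hne : ¬ ∀ x ∈ Metric.ball (0 : E3) r₀, v x = 0) :
    (∀ r ∈ Set.Ioo (0:ℝ) r₀,
        0 < ∫ x in Metric.sphere (0 : E3) r, ‖v x‖ ^ 2 ∂μH[2]) ∧
      MonotoneOn (fun r =>
          r * (∫ x in Metric.ball (0 : E3) r, frobSq v x) /
            ∫ x in Metric.sphere (0 : E3) r, ‖v x‖ ^ 2 ∂μH[2])
        (Set.Ioo 0 r₀) := by
  simpa [frobSq] using frequency_monotone_general (n := 2) (by simp)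
    (EuclideanSpace.basisFun (Fin 3) ℝ) (hv.harmonicOnNhd isOpen_ball) hne
end
end

section
/- Let N₀ > 0, C ≥ 0, C′ ≥ 0 and γ ∈ (0, 1]. Let D ⊆ ℂ be the open unit disk, let α : D → ℂ and v : D → ℝ be continuous, and set K = {z ∈ D : α(z) = 0 and v(z) = 0}. Assume: (i) α and v are smooth on D ∖ K and there satisfy the system ∂_z α = −(1/2)(1+N₀)(1+τ₀(z))·v and ∂_{z̄} v = 2N₀(1+τ₁(z))·α, where τ₀, τ₁ : D → ℂ are continuous with |τ₀(z)| + |τ₁(z)| ≤ C|z|² for all z; (ii) |α(z)| + |v(z)| ≤ C′·dist(z, K)^γ whenever |z| ≤ 3/4; (iii) the first derivatives of α and v are square-integrable on {|z| ≤ 3/4} ∖ K and lim_{ρ→0⁺} ∫_{{z : |z| ≤ 3/4, 0 < |α(z)|+|v(z)| < ρ}} (|Dα|² + |Dv|²) = 0; (iv) 0 is an accumulation point of K ∖ {0}. Then there exist radii 0 < a < b ≤ 3/4 such that α and v vanish identically on the annulus {z : a ≤ |z| ≤ b}. -/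
open MeasureTheory Metric Filter

noncomputable section

/-- The Wirtinger derivative `∂_z g = (1/2)(∂_x g − i·∂_y g)` of a map `g : ℂ → ℂ`,
computed from its real total derivative. -/
def wirtingerZ (g : ℂ → ℂ) (z : ℂ) : ℂ :=
  (1 / 2 : ℂ) * (fderiv ℝ g z 1 - Complex.I * fderiv ℝ g z Complex.I)

/-- The Wirtinger derivative `∂_z̄ v = (1/2)(∂_x v + i·∂_y v)` of a real-valued `v : ℂ → ℝ`. -/
def wirtingerZbar (v : ℂ → ℝ) (z : ℂ) : ℂ :=
  (1 / 2 : ℂ) * ((fderiv ℝ v z 1 : ℝ) + Complex.I * ((fderiv ℝ v z Complex.I : ℝ) : ℂ))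

/-- The squared Euclidean norm of the real total derivative of `g : ℂ → ℂ`. -/
def DsqC (g : ℂ → ℂ) (z : ℂ) : ℝ :=
  ‖fderiv ℝ g z 1‖ ^ 2 + ‖fderiv ℝ g z Complex.I‖ ^ 2

/-- The squared Euclidean norm of the real total derivative of `v : ℂ → ℝ`. -/
def DsqR (v : ℂ → ℝ) (z : ℂ) : ℝ :=
  ‖fderiv ℝ v z 1‖ ^ 2 + ‖fderiv ℝ v z Complex.I‖ ^ 2

/-!
Conjugating `α` turns the system into a single inequality `|∂̄u| ≤ M|u|` for `u = (ᾱ, v)`, so the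
claim is a strong unique continuation principle. Convolution with the Cauchy kernel gives the
`L¹` bound `∫_{B_R} |h| ≤ 4R ∫_{B_R} |∂̄h|` for `h` compactly supported in the disk `B_R`; applying
it to `Qu`, with `Q` a scalar cutoff, and absorbing the term with `M` for small `R` yields the
Carleman inequality `∫ |Q||u| ≤ 8R ∫ |∂̄Q||u|`. Near the zero set, where `u` need not be
differentiable, `u` is first truncated, and the error tends to `0` because `|Du|` is integrable.

If `u` vanishes at `p`, then `Q` may be replaced by `Q / (z - p)`, whose `∂̄` is `∂̄Q / (z - p)`
away from `p`; cutting out `B_δ(p)` costs `O(sup_{B_δ(p)} |u|)`, which tends to `0`. So the same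
inequality, with the same constant, holds for the weight `|u| / |z - p|`. Repeating this at `n`
zeros `p` in a small disk `B_r` makes the weight factor at least `(2r)⁻ⁿ` on `B_r` and at most
`(s - r)⁻ⁿ` off `B_s`. If `Q = 1` on `B_s`, this gives `∫_{B_r} |u| ≤ C (2r / (s - r))ⁿ`, and
infinitely many zeros force `u = 0` on `B_r` once `3r < s`.
-/

open scoped ENNReal NNReal Topology ComplexConjugate
open Complex (I)

section Dbar

variable {E : Type*} [NormedAddCommGroup E] [NormedSpace ℂ E]

/-- The `∂̄` operator `(1/2)(∂_x g + i·∂_y g)` on maps from `ℂ` to a complex normed space, computed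
from the real total derivative. It is set to the junk value `0` where `g` is not differentiable. -/
def dbar (g : ℂ → E) (z : ℂ) : E :=
  (1 / 2 : ℂ) • (fderiv ℝ g z 1 + I • fderiv ℝ g z I)

lemma continuous_dbar {g : ℂ → E} (hg : ContDiff ℝ 1 g) : Continuous (dbar g) := by
  have := hg.continuous_fderiv one_ne_zero
  unfold dbar
  fun_prop

lemma dbar_congr_of_eventuallyEq {f g : ℂ → E} {z : ℂ} (h : f =ᶠ[𝓝 z] g) :
    dbar f z = dbar g z := by
  simp only [dbar, h.fderiv_eq]

lemma dbar_of_notMem_tsupport {g : ℂ → E} {z : ℂ} (hz : z ∉ tsupport g) : dbar g z = 0 := by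
  simp [dbar, fderiv_of_notMem_tsupport ℝ hz]

lemma dbar_comp_add_right (g : ℂ → E) (a z : ℂ) : dbar (fun w => g (w + a)) z = dbar g (z + a) := by
  simp only [dbar, fderiv_comp_add_right]

lemma norm_dbar_le (g : ℂ → E) (z : ℂ) : ‖dbar g z‖ ≤ ‖fderiv ℝ g z‖ := by
  have h1 := (fderiv ℝ g z).le_opNorm 1
  have hI := (fderiv ℝ g z).le_opNorm I
  have hsum := norm_add_le (fderiv ℝ g z 1) (I • fderiv ℝ g z I)
  simp only [norm_one, Complex.norm_I, mul_one] at h1 hI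
  rw [norm_smul I, Complex.norm_I, one_mul] at hsum
  rw [dbar, norm_smul]
  norm_num
  linarith

lemma fderiv_add_I_smul_fderiv_I_mul (g : ℂ → E) (z w : ℂ) :
    fderiv ℝ g z w + I • fderiv ℝ g z (I * w) = (2 * conj w) • dbar g z := by
  have hw : fderiv ℝ g z w = (w.re : ℂ) • fderiv ℝ g z 1 + (w.im : ℂ) • fderiv ℝ g z I := by
    simp only [Complex.coe_smul, ← map_smul, ← map_add]
    simp
  have hIw : fderiv ℝ g z (I * w) =
      -(w.im : ℂ) • fderiv ℝ g z 1 + (w.re : ℂ) • fderiv ℝ g z I := by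
    simp only [neg_smul, Complex.coe_smul, ← map_smul, ← map_neg, ← map_add]
    congr 1
    apply Complex.ext <;> simp
  have hconj : conj w = w.re - w.im * I := by
    apply Complex.ext <;> simp
  rw [hw, hIw, hconj, dbar]
  match_scalars
  · ring
  · linear_combination (w.im : ℂ) * Complex.I_sq

lemma dbar_smul {f : ℂ → ℂ} {g : ℂ → E} {z : ℂ} (hf : DifferentiableAt ℝ f z)
    (hg : DifferentiableAt ℝ g z) :
    dbar (fun w => f w • g w) z = f z • dbar g z + dbar f z • g z := by
  simp only [dbar, fderiv_fun_smul hf hg, add_apply,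
    smul_apply, ContinuousLinearMap.smulRight_apply, smul_eq_mul]
  module

lemma dbar_eq_zero_of_differentiableAt {f : ℂ → E} {z : ℂ} (hf : DifferentiableAt ℂ f z) :
    dbar f z = 0 := by
  have hI : fderiv ℂ f z I = I • fderiv ℂ f z 1 := by
    rw [← map_smul, smul_eq_mul, mul_one]
  simp [dbar, hf.fderiv_restrictScalars ℝ, hI, smul_smul]

end Dbar

section CauchyPompeiu

variable {E : Type*} [NormedAddCommGroup E] [NormedSpace ℂ E] {h : ℂ → E}

/-- The real derivative of `h` at the point with polar coordinates `x`, in the direction which is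
the multiple `a` of the unit vector pointing radially outwards: `a = 1` gives the radial and `a = I`
the angular derivative (divided by the radius). -/
def polarDeriv (h : ℂ → E) (a : ℂ) (x : ℝ × ℝ) : E :=
  fderiv ℝ h (circleMap 0 x.1 x.2) (a * circleMap 0 1 x.2)

lemma circleMap_zero_eq_mul (r θ : ℝ) : circleMap 0 r θ = r * circleMap 0 1 θ := by
  simp [circleMap]

lemma continuous_polarDeriv (hh : ContDiff ℝ 1 h) (a : ℂ) : Continuous (polarDeriv h a) := by
  have := hh.continuous_fderiv one_ne_zero
  unfold polarDeriv circleMap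
  fun_prop

lemma integrableOn_polarDeriv (hh : ContDiff ℝ 1 h) (hc : HasCompactSupport h) (a : ℂ) :
    IntegrableOn (polarDeriv h a) polarCoord.target := by
  obtain ⟨L, hL⟩ := hc.isCompact.isBounded.subset_closedBall 0
  have hcpt : IsCompact (Set.Icc 0 L ×ˢ Set.Icc (-Real.pi) Real.pi) :=
    isCompact_Icc.prod isCompact_Icc
  have hint := (continuous_polarDeriv hh a).continuousOn.integrableOn_compact hcpt (μ := volume)
  refine hint.of_forall_sdiff_eq_zero polarCoord.open_target.measurableSet fun x ⟨hx, hxL⟩ => ?_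
  rw [polarCoord_target] at hx
  have hLx : L < x.1 := by
    by_contra! hle
    exact hxL ⟨⟨le_of_lt hx.1, hle⟩, Set.Ioo_subset_Icc_self hx.2⟩
  have hsupp : circleMap 0 x.1 x.2 ∉ tsupport h := fun hmem => by
    have := mem_closedBall_zero_iff.1 (hL hmem)
    rw [norm_circleMap_zero, abs_of_pos hx.1] at this
    exact absurd this hLx.not_ge
  rw [polarDeriv, fderiv_of_notMem_tsupport ℝ hsupp, zero_apply]

variable [CompleteSpace E]

lemma integral_polarDeriv_radial (hh : ContDiff ℝ 1 h) (hc : HasCompactSupport h) :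
    ∫ x in polarCoord.target, polarDeriv h 1 x = -((2 * Real.pi) • h 0) := by
  have hray (θ : ℝ) : ∫ r in Set.Ioi (0 : ℝ), polarDeriv h 1 (r, θ) = -h 0 := by
    have hisometry : Isometry fun r : ℝ => circleMap 0 r θ := Isometry.of_dist_eq fun r s => by
      rw [circleMap_zero, circleMap_zero, dist_eq_norm, ← sub_mul, norm_mul,
        Complex.norm_exp_ofReal_mul_I, mul_one, ← Complex.ofReal_sub, Complex.norm_real,
        dist_eq_norm]
    have hcontDiff : ContDiff ℝ 1 fun r : ℝ => circleMap 0 r θ := by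
      simp only [circleMap_zero]
      exact Complex.ofRealCLM.contDiff.mul contDiff_const
    have hderiv (r : ℝ) :
        HasDerivAt (fun r : ℝ => h (circleMap 0 r θ)) (polarDeriv h 1 (r, θ)) r := by
      have hcircle : HasDerivAt (fun r : ℝ => circleMap 0 r θ) (1 * circleMap 0 1 θ) r := by
        simpa [circleMap] using (Complex.ofRealCLM.hasDerivAt (x := r)).mul_const _
      exact (hh.differentiable one_ne_zero _).hasFDerivAt.comp_hasDerivAt r hcircle
    have := (hc.comp_isClosedEmbedding hisometry.isClosedEmbedding).integral_Ioi_deriv_eq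
      (hh.comp hcontDiff) 0
    simpa [Function.comp_def, (hderiv _).deriv] using this
  have hint := integrableOn_polarDeriv hh hc 1
  rw [polarCoord_target, Measure.volume_eq_prod] at hint ⊢
  rw [IntegrableOn, ← Measure.prod_restrict] at hint
  rw [← Measure.prod_restrict, integral_prod_symm _ hint]
  simp [hray, two_mul, Real.pi_pos.le]

lemma integral_polarDeriv_angular (hh : ContDiff ℝ 1 h) (hc : HasCompactSupport h) :
    ∫ x in polarCoord.target, polarDeriv h I x = 0 := by
  have hcircle (r : ℝ) (hr : r ∈ Set.Ioi (0 : ℝ)) :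
      ∫ θ in Set.Ioo (-Real.pi) Real.pi, polarDeriv h I (r, θ) = 0 := by
    have hderiv (θ : ℝ) :
        HasDerivAt (fun θ : ℝ => h (circleMap 0 r θ)) (r • polarDeriv h I (r, θ)) θ := by
      have hchain := (hh.differentiable one_ne_zero _).hasFDerivAt.comp_hasDerivAt θ
        (hasDerivAt_circleMap 0 r θ)
      simp only [polarDeriv]
      rwa [← map_smul, Complex.real_smul, mul_left_comm, ← circleMap_zero_eq_mul, mul_comm I]
    have hint := intervalIntegral.integral_eq_sub_of_hasDerivAt (a := -Real.pi) (b := Real.pi)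
      (fun θ _ => hderiv θ) (Continuous.intervalIntegrable
        (((continuous_polarDeriv hh I).comp (Continuous.prodMk_right r)).const_smul r) _ _)
    have hperiod : circleMap 0 r (-Real.pi) = circleMap 0 r Real.pi := by
      simp [circleMap]
    rw [hperiod, sub_self, intervalIntegral.integral_smul, smul_eq_zero_iff_right (ne_of_gt hr),
      intervalIntegral.integral_of_le (by linarith [Real.pi_pos]),
      integral_Ioc_eq_integral_Ioo] at hint
    exact hint
  have hint := integrableOn_polarDeriv hh hc I
  rw [polarCoord_target, Measure.volume_eq_prod] at hint ⊢
  rw [setIntegral_prod _ hint, setIntegral_congr_fun measurableSet_Ioi hcircle,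
    integral_zero]

lemma integral_inv_smul_dbar (hh : ContDiff ℝ 1 h) (hc : HasCompactSupport h) :
    ∫ w, w⁻¹ • dbar h w = -(Real.pi • h 0) := by
  have hpolar : ∀ x ∈ polarCoord.target,
      x.1 • ((Complex.polarCoord.symm x)⁻¹ • dbar h (Complex.polarCoord.symm x)) =
        (2⁻¹ : ℂ) • (polarDeriv h 1 x + I • polarDeriv h I x) := by
    rintro ⟨r, θ⟩ hx
    have hr : (r : ℂ) ≠ 0 := by exact_mod_cast (ne_of_gt (polarCoord_target ▸ hx).1)
    have hz : Complex.polarCoord.symm (r, θ) = circleMap 0 r θ := by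
      simp [Complex.polarCoord_symm_apply, circleMap, Complex.exp_mul_I]
    have hconj : conj (circleMap 0 1 θ) = (circleMap 0 1 θ)⁻¹ :=
      (Complex.inv_eq_conj (by simp)).symm
    simp only [polarDeriv, one_mul, fderiv_add_I_smul_fderiv_I_mul, hz, hconj,
      circleMap_zero_eq_mul r, ← Complex.coe_smul]
    match_scalars
    simp only [mul_inv_rev, mul_one, ne_eq, OfNat.ofNat_ne_zero, not_false_eq_true,
      inv_mul_cancel_left₀]
    field_simp
  rw [← Complex.integral_comp_polarCoord_symm,
    setIntegral_congr_fun polarCoord.open_target.measurableSet hpolar, integral_smul,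
    integral_add (integrableOn_polarDeriv hh hc 1)
      ((integrableOn_polarDeriv hh hc I).fun_smul I),
    integral_smul, integral_polarDeriv_radial hh hc, integral_polarDeriv_angular hh hc,
    ← Complex.coe_smul, ← Complex.coe_smul]
  match_scalars
  ring

theorem cauchy_pompeiu (hh : ContDiff ℝ 1 h) (hc : HasCompactSupport h) (z : ℂ) :
    ∫ w, (w - z)⁻¹ • dbar h w = -(Real.pi • h z) := by
  have := integral_inv_smul_dbar (h := fun w => h (w + z)) (by fun_prop)
    (hc.comp_homeomorph (Homeomorph.addRight z))
  rw [← integral_add_right_eq_self _ z]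
  simpa [dbar_comp_add_right] using this

end CauchyPompeiu

section L1Estimate

lemma lintegral_ball_inv_enorm_sub (p : ℂ) {r : ℝ} (hr : 0 ≤ r) :
    ∫⁻ z in ball p r, ‖z - p‖ₑ⁻¹ = ENNReal.ofReal (2 * Real.pi * r) := by
  have hcentre : ∫⁻ z in ball p r, ‖z - p‖ₑ⁻¹ =
      ∫⁻ z, (ball (0 : ℂ) r).indicator (fun z => ‖z‖ₑ⁻¹) z := by
    rw [← lintegral_indicator measurableSet_ball,
      ← lintegral_sub_right_eq_self ((ball (0 : ℂ) r).indicator _) p]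
    simp only [Set.indicator, mem_ball_iff_norm, sub_zero]
  have hpolar : ∀ x ∈ polarCoord.target, ENNReal.ofReal x.1 •
      (ball (0 : ℂ) r).indicator (fun z => ‖z‖ₑ⁻¹) (Complex.polarCoord.symm x) =
        (Set.Iio r ×ˢ Set.univ).indicator 1 x := by
    intro x hx
    have hx0 : 0 < x.1 := (polarCoord_target ▸ hx).1
    have hnorm : ‖Complex.polarCoord.symm x‖ = x.1 := by
      rw [Complex.norm_polarCoord_symm, abs_of_pos hx0]
    by_cases hxr : x.1 < r
    · rw [Set.indicator_of_mem (by rwa [mem_ball_zero_iff, hnorm]), Set.indicator_of_mem (by simpa),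
        ← ofReal_norm, hnorm, smul_eq_mul, Pi.one_apply,
        ENNReal.mul_inv_cancel (by simpa) ENNReal.ofReal_ne_top]
    · rw [Set.indicator_of_notMem (by rwa [mem_ball_zero_iff, hnorm]),
        Set.indicator_of_notMem (by simpa using hxr), smul_zero]
  rw [hcentre, ← Complex.lintegral_comp_polarCoord_symm,
    setLIntegral_congr_fun polarCoord.open_target.measurableSet hpolar,
    lintegral_indicator_one (measurableSet_Iio.prod .univ),
    Measure.restrict_apply (measurableSet_Iio.prod .univ), polarCoord_target,
    Set.prod_inter_prod, Set.inter_comm, Set.Ioi_inter_Iio, Set.univ_inter,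
    Measure.volume_eq_prod, Measure.prod_prod, Real.volume_Ioo, Real.volume_Ioo,
    ← ENNReal.ofReal_mul (by simpa)]
  congr 1
  ring

lemma lintegral_ball_inv_enorm_sub_le {x w : ℂ} {R : ℝ} (hw : w ∈ ball x R) :
    ∫⁻ z in ball x R, ‖w - z‖ₑ⁻¹ ≤ ENNReal.ofReal (4 * Real.pi * R) := by
  have hR : 0 < R := pos_of_mem_ball hw
  calc ∫⁻ z in ball x R, ‖w - z‖ₑ⁻¹
      ≤ ∫⁻ z in ball w (2 * R), ‖w - z‖ₑ⁻¹ :=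
        lintegral_mono_set (ball_subset_ball' (by linarith [mem_ball'.1 hw]))
    _ = ENNReal.ofReal (4 * Real.pi * R) := by
        simp_rw [fun z => enorm_sub_rev w z]
        rw [lintegral_ball_inv_enorm_sub w (by positivity)]
        congr 1
        ring

variable {E : Type*} [NormedAddCommGroup E] [NormedSpace ℂ E] [CompleteSpace E] {h : ℂ → E}

lemma pi_mul_enorm_le_lintegral_dbar (hh : ContDiff ℝ 1 h) (hc : HasCompactSupport h) (z : ℂ) :
    ENNReal.ofReal Real.pi * ‖h z‖ₑ ≤ ∫⁻ w, ‖w - z‖ₑ⁻¹ * ‖dbar h w‖ₑ :=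
  calc ENNReal.ofReal Real.pi * ‖h z‖ₑ
      = ‖∫ w, (w - z)⁻¹ • dbar h w‖ₑ := by
        rw [cauchy_pompeiu hh hc, enorm_neg, enorm_smul, Real.enorm_of_nonneg Real.pi_pos.le]
    _ ≤ ∫⁻ w, ‖(w - z)⁻¹ • dbar h w‖ₑ := enorm_integral_le_lintegral_enorm _
    _ ≤ ∫⁻ w, ‖w - z‖ₑ⁻¹ * ‖dbar h w‖ₑ := by
        gcongr with w
        rw [enorm_smul]
        gcongr
        obtain hwz | hwz := eq_or_ne (w - z) 0
        · simp [hwz]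
        · rw [enorm_inv hwz]

theorem lintegral_enorm_le_lintegral_dbar (hh : ContDiff ℝ 1 h) {x : ℂ} {R : ℝ}
    (hs : tsupport h ⊆ ball x R) :
    ∫⁻ z in ball x R, ‖h z‖ₑ ≤ ENNReal.ofReal (4 * R) * ∫⁻ z in ball x R, ‖dbar h z‖ₑ := by
  have hc : HasCompactSupport h :=
    (isBounded_ball.subset hs).isCompact_closure.of_isClosed_subset (isClosed_tsupport h)
      subset_closure
  have hdbar : Measurable fun w => ‖dbar h w‖ₑ := (continuous_dbar hh).enorm.measurable
  have hpi : ENNReal.ofReal Real.pi ≠ 0 := by simpa using Real.pi_pos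
  rw [← ENNReal.mul_le_mul_iff_right hpi ENNReal.ofReal_ne_top,
    ← lintegral_const_mul' _ _ ENNReal.ofReal_ne_top]
  calc ∫⁻ z in ball x R, ENNReal.ofReal Real.pi * ‖h z‖ₑ
      ≤ ∫⁻ z in ball x R, ∫⁻ w, ‖w - z‖ₑ⁻¹ * ‖dbar h w‖ₑ :=
        lintegral_mono (pi_mul_enorm_le_lintegral_dbar hh hc)
    _ = ∫⁻ z in ball x R, ∫⁻ w in ball x R, ‖w - z‖ₑ⁻¹ * ‖dbar h w‖ₑ := by
        congr! 2 with z
        refine (setLIntegral_eq_of_support_subset fun w hw => ?_).symm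
        contrapose! hw
        simp [dbar_of_notMem_tsupport fun hw' => hw (hs hw')]
    _ = ∫⁻ w in ball x R, ∫⁻ z in ball x R, ‖w - z‖ₑ⁻¹ * ‖dbar h w‖ₑ := by
        refine lintegral_lintegral_swap (Measurable.aemeasurable ?_)
        exact (by fun_prop : Measurable fun y : ℂ × ℂ => ‖y.2 - y.1‖ₑ⁻¹).mul
          (hdbar.comp measurable_snd)
    _ = ∫⁻ w in ball x R, (∫⁻ z in ball x R, ‖w - z‖ₑ⁻¹) * ‖dbar h w‖ₑ := by
        congr! 2 with w
        rw [lintegral_mul_const _ (by fun_prop)]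
    _ ≤ ∫⁻ w in ball x R, ENNReal.ofReal (4 * Real.pi * R) * ‖dbar h w‖ₑ :=
        setLIntegral_mono' measurableSet_ball fun w hw => by
          gcongr
          exact lintegral_ball_inv_enorm_sub_le hw
    _ = ENNReal.ofReal Real.pi * (ENNReal.ofReal (4 * R) * ∫⁻ z in ball x R, ‖dbar h z‖ₑ) := by
        rw [lintegral_const_mul' _ _ ENNReal.ofReal_ne_top, ← mul_assoc,
          ← ENNReal.ofReal_mul Real.pi_pos.le]
        ring_nf

end L1Estimate

lemma exists_enorm_le_of_hasCompactSupport {X F : Type*} [TopologicalSpace X]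
    [SeminormedAddCommGroup F] {f : X → F} (hf : Continuous f) (hc : HasCompactSupport f) :
    ∃ B : ℝ≥0, ∀ x, ‖f x‖ₑ ≤ B := by
  obtain ⟨B, hB⟩ := hc.exists_bound_of_continuous hf
  exact ⟨B.toNNReal, fun x => (ofReal_norm (f x)).symm.trans_le (ENNReal.ofReal_le_ofReal (hB x))⟩

section PunctureCutoff

variable {E : Type*} [NormedAddCommGroup E] [NormedSpace ℝ E]

/-- `η` is a cutoff function deleting a neighbourhood of `p`: it vanishes near `p`, equals `1` at
distance at least `δ` from `p`, and its gradient has the scaling-invariant bound `L / δ`. -/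
structure IsPunctureCutoff (η : E → ℝ) (p : E) (δ L : ℝ) : Prop where
  contDiff : ContDiff ℝ 1 η
  mem_Icc (x : E) : η x ∈ Set.Icc 0 1
  eventuallyEq_zero : η =ᶠ[𝓝 p] 0
  eq_one {x : E} : δ ≤ dist x p → η x = 1
  norm_fderiv_le (x : E) : ‖fderiv ℝ η x‖ ≤ L / δ

lemma IsPunctureCutoff.enorm_le_one {η : E → ℝ} {p : E} {δ L : ℝ} (hη : IsPunctureCutoff η p δ L)
    (x : E) : ‖η x‖ₑ ≤ 1 := by
  rw [Real.enorm_of_nonneg (hη.mem_Icc x).1]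
  exact ENNReal.ofReal_le_one.2 (hη.mem_Icc x).2

lemma IsPunctureCutoff.fderiv_eq_zero {η : E → ℝ} {p x : E} {δ L : ℝ}
    (hη : IsPunctureCutoff η p δ L) (hx : δ ≤ dist x p) : fderiv ℝ η x = 0 :=
  IsLocalMax.fderiv_eq_zero (Eventually.of_forall fun y => hη.eq_one hx ▸ (hη.mem_Icc y).2)

lemma IsPunctureCutoff.enorm_fderiv_le {η : E → ℝ} {p : E} {δ L : ℝ}
    (hη : IsPunctureCutoff η p δ L) (x : E) :
    ‖fderiv ℝ η x‖ₑ ≤ (ball p δ).indicator (fun _ => ENNReal.ofReal (L / δ)) x := by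
  by_cases hx : x ∈ ball p δ
  · rw [Set.indicator_of_mem hx, ← ofReal_norm]
    exact ENNReal.ofReal_le_ofReal (hη.norm_fderiv_le x)
  · rw [← ofReal_norm, hη.fderiv_eq_zero (not_lt.1 hx), norm_zero, ENNReal.ofReal_zero]
    exact zero_le

theorem exists_isPunctureCutoff (E : Type*) [NormedAddCommGroup E] [NormedSpace ℝ E]
    [FiniteDimensional ℝ E] :
    ∃ L : ℝ, ∀ (p : E) {δ : ℝ}, 0 < δ → ∃ η : E → ℝ, IsPunctureCutoff η p δ L := by
  let b : ContDiffBump (0 : E) := ⟨1 / 2, 1, by norm_num, by norm_num⟩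
  have hb : ContDiff ℝ 1 b := b.contDiff
  obtain ⟨L, hL⟩ := (b.hasCompactSupport.fderiv ℝ).exists_bound_of_continuous
    (hb.continuous_fderiv one_ne_zero)
  refine ⟨L, fun p δ hδ => ⟨fun x => 1 - b (δ⁻¹ • (x - p)), ?_, ?_, ?_, ?_, ?_⟩⟩
  · exact contDiff_const.sub (hb.comp (by fun_prop))
  · exact fun x => ⟨sub_nonneg.2 b.le_one, sub_le_self _ b.nonneg⟩
  · have htendsto : Tendsto (fun x => δ⁻¹ • (x - p)) (𝓝 p) (𝓝 0) :=
      (by fun_prop : Continuous fun x => δ⁻¹ • (x - p)).tendsto' p 0 (by simp)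
    filter_upwards [htendsto.eventually b.eventuallyEq_one] with x hx
    simp [hx]
  · intro x hx
    have hnorm : 1 ≤ dist (δ⁻¹ • (x - p)) 0 := by
      rw [dist_zero_right, norm_smul, norm_inv, Real.norm_of_nonneg hδ.le, ← dist_eq_norm,
        ← div_eq_inv_mul]
      exact (one_le_div hδ).2 hx
    rw [b.zero_of_le_dist hnorm, sub_zero]
  · intro x
    have hderiv : fderiv ℝ (fun x => b (δ⁻¹ • (x - p))) x =
        δ⁻¹ • fderiv ℝ b (δ⁻¹ • (x - p)) := by
      rw [fderiv_comp_sub (f := fun y => b (δ⁻¹ • y)), fderiv_comp_smul]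
    rw [fderiv_const_sub, norm_neg, hderiv, norm_smul, norm_inv, Real.norm_of_nonneg hδ.le,
      ← div_eq_inv_mul]
    gcongr
    exact hL _

end PunctureCutoff

section CutoffDbar

variable {E : Type*} [NormedAddCommGroup E] [NormedSpace ℂ E]

lemma enorm_dbar_real_smul_le {f : ℂ → ℝ} {g : ℂ → E} {z : ℂ} (hf : DifferentiableAt ℝ f z)
    (hg : DifferentiableAt ℝ g z) :
    ‖dbar (fun w => f w • g w) z‖ₑ ≤ ‖f z‖ₑ * ‖dbar g z‖ₑ + ‖fderiv ℝ f z‖ₑ * ‖g z‖ₑ := by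
  have hfC : HasFDerivAt (fun w => (f w : ℂ)) (Complex.ofRealCLM ∘L fderiv ℝ f z) z :=
    Complex.ofRealCLM.hasFDerivAt.comp z hf.hasFDerivAt
  have hdbar : ‖dbar (fun w => (f w : ℂ)) z‖ₑ ≤ ‖fderiv ℝ f z‖ₑ := by
    rw [enorm_le_iff_norm_le]
    refine (norm_dbar_le _ z).trans (hfC.fderiv ▸ ?_)
    simpa using Complex.ofRealCLM.opNorm_comp_le (fderiv ℝ f z)
  calc ‖dbar (fun w => f w • g w) z‖ₑ
      = ‖(f z : ℂ) • dbar g z + dbar (fun w => (f w : ℂ)) z • g z‖ₑ := by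
        rw [← dbar_smul hfC.differentiableAt hg]
        rfl
    _ ≤ ‖(f z : ℂ) • dbar g z‖ₑ + ‖dbar (fun w => (f w : ℂ)) z • g z‖ₑ := enorm_add_le _ _
    _ ≤ ‖f z‖ₑ * ‖dbar g z‖ₑ + ‖fderiv ℝ f z‖ₑ * ‖g z‖ₑ := by
        rw [Complex.coe_smul, enorm_smul, enorm_smul]
        gcongr

end CutoffDbar

section Carleman

/-- The weighted Cauchy–Pompeiu inequality on `Ω` with constant `c` and weight `U`: an `L¹` estimate
of Carleman type for the `∂̄` operator on test functions supported in `Ω`. -/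
def HasDbarCarleman (Ω : Set ℂ) (c : ℝ≥0) (U : ℂ → ℝ≥0∞) : Prop :=
  ∀ Q : ℂ → ℂ, ContDiff ℝ 1 Q → HasCompactSupport Q → tsupport Q ⊆ Ω →
    ∫⁻ z in Ω, ‖Q z‖ₑ * U z ≤ c * ∫⁻ z in Ω, ‖dbar Q z‖ₑ * U z

lemma lintegral_le_of_frequently_compl_ball {X : Type*} [MetricSpace X] [MeasurableSpace X]
    {μ : Measure X} [NullSingletonClass μ] {f : X → ℝ≥0∞} {a : ℝ≥0∞} {p : X}
    (h : ∃ᶠ δ in 𝓝[>] 0, ∫⁻ x in (ball p δ)ᶜ, f x ∂μ ≤ a) : ∫⁻ x, f x ∂μ ≤ a := by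
  have hmono : Monotone fun n : ℕ => (ball p (1 / (n + 1 : ℝ)))ᶜ := fun m n hmn =>
    Set.compl_subset_compl.2 (ball_subset_ball (by gcongr))
  have hunion : ⋃ n : ℕ, (ball p (1 / (n + 1 : ℝ)))ᶜ = {p}ᶜ := by
    ext x
    simp only [Set.mem_iUnion, Set.mem_compl_iff, mem_ball, not_lt, Set.mem_singleton_iff]
    refine ⟨fun ⟨n, hn⟩ hx => ?_, fun hx => ?_⟩
    · exact absurd hn (by simpa [hx] using Nat.cast_add_one_pos n)
    · exact (exists_nat_one_div_lt (dist_pos.2 hx)).imp fun n hn => hn.le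
  rw [← restrict_compl_singleton (μ := μ) p, ← hunion,
    setLIntegral_iUnion_of_directed f hmono.directed_le]
  refine iSup_le fun n => ?_
  obtain ⟨δ, hδ, hle⟩ :=
    (h.and_eventually (Ioo_mem_nhdsGT (Nat.one_div_pos_of_nat (n := n)))).exists
  exact (lintegral_mono_set (Set.compl_subset_compl.2 (ball_subset_ball hle.2.le))).trans hδ

variable {Q : ℂ → ℂ} {η : ℂ → ℝ} {p : ℂ} {δ L : ℝ}

lemma dbar_inv_sub_smul {z : ℂ} (hz : z ≠ p) (hQ : DifferentiableAt ℝ Q z) :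
    dbar (fun w => (w - p)⁻¹ • Q w) z = (z - p)⁻¹ • dbar Q z := by
  have hinv : DifferentiableAt ℂ (fun w => (w - p)⁻¹) z :=
    (differentiableAt_id.sub_const p).inv (sub_ne_zero.2 hz)
  rw [dbar_smul (hinv.restrictScalars ℝ) hQ, dbar_eq_zero_of_differentiableAt hinv, zero_smul,
    add_zero]

lemma IsPunctureCutoff.contDiff_smul_inv_sub_smul (hη : IsPunctureCutoff η p δ L)
    (hQ : ContDiff ℝ 1 Q) : ContDiff ℝ 1 fun z => η z • (z - p)⁻¹ • Q z := by
  rw [contDiff_iff_contDiffAt]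
  intro z
  obtain rfl | hz := eq_or_ne z p
  · exact (contDiffAt_const (c := (0 : ℂ))).congr_of_eventuallyEq
      (hη.eventuallyEq_zero.mono fun w hw => by simp [hw])
  · exact hη.contDiff.contDiffAt.smul
      (((contDiffAt_id.sub contDiffAt_const).inv (sub_ne_zero.2 hz)).smul hQ.contDiffAt)

lemma IsPunctureCutoff.enorm_dbar_smul_inv_sub_smul_le (hη : IsPunctureCutoff η p δ L)
    (hQ : ContDiff ℝ 1 Q) (z : ℂ) :
    ‖dbar (fun w => η w • (w - p)⁻¹ • Q w) z‖ₑ ≤ ‖z - p‖ₑ⁻¹ *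
      (‖dbar Q z‖ₑ + (ball p δ).indicator (fun _ => ENNReal.ofReal (L / δ)) z * ‖Q z‖ₑ) := by
  obtain rfl | hz := eq_or_ne z p
  · rw [dbar_congr_of_eventuallyEq (g := fun _ => 0)
      (hη.eventuallyEq_zero.mono fun w hw => by simp [hw])]
    simp [dbar]
  have hzp : z - p ≠ 0 := sub_ne_zero.2 hz
  have hQz : DifferentiableAt ℝ Q z := hQ.differentiable one_ne_zero z
  have hquot : DifferentiableAt ℝ (fun w => (w - p)⁻¹ • Q w) z := by
    fun_prop (disch := exact hzp)
  calc ‖dbar (fun w => η w • (w - p)⁻¹ • Q w) z‖ₑ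
      ≤ ‖η z‖ₑ * ‖dbar (fun w => (w - p)⁻¹ • Q w) z‖ₑ
          + ‖fderiv ℝ η z‖ₑ * ‖(z - p)⁻¹ • Q z‖ₑ :=
        enorm_dbar_real_smul_le (hη.contDiff.differentiable one_ne_zero z) hquot
    _ ≤ 1 * (‖z - p‖ₑ⁻¹ * ‖dbar Q z‖ₑ) +
          (ball p δ).indicator (fun _ => ENNReal.ofReal (L / δ)) z * (‖z - p‖ₑ⁻¹ * ‖Q z‖ₑ) := by
        rw [dbar_inv_sub_smul hz hQz, enorm_smul, enorm_smul, enorm_inv hzp]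
        gcongr
        exacts [hη.enorm_le_one z, hη.enorm_fderiv_le z]
    _ = _ := by ring

lemma IsPunctureCutoff.lintegral_enorm_dbar_smul_inv_sub_smul_mul_le {Ω : Set ℂ} {B : ℝ≥0}
    {U : ℂ → ℝ≥0∞} {ε : ℝ≥0∞} (hη : IsPunctureCutoff η p δ L) (hδ : 0 < δ)
    (hUε : ∀ z ∈ ball p δ, U z ≤ ε) (hQ : ContDiff ℝ 1 Q) (hQB : ∀ z, ‖Q z‖ₑ ≤ B) :
    ∫⁻ z in Ω, ‖dbar (fun w => η w • (w - p)⁻¹ • Q w) z‖ₑ * U z ≤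
      (∫⁻ z in Ω, ‖dbar Q z‖ₑ * (U z * ‖z - p‖ₑ⁻¹))
        + B * ENNReal.ofReal (2 * Real.pi * L) * ε := by
  set a : ℝ≥0∞ := ENNReal.ofReal (L / δ)
  have hpole : ∫⁻ z in Ω, (ball p δ).indicator (fun z => ‖z - p‖ₑ⁻¹) z ≤
      ENNReal.ofReal (2 * Real.pi * δ) := by
    rw [← lintegral_ball_inv_enorm_sub p hδ.le, ← lintegral_indicator measurableSet_ball]
    exact setLIntegral_le_lintegral _ _
  have hmeas : Measurable ((ball p δ).indicator fun z => ‖z - p‖ₑ⁻¹) :=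
    Measurable.indicator (by fun_prop) measurableSet_ball
  calc ∫⁻ z in Ω, ‖dbar (fun w => η w • (w - p)⁻¹ • Q w) z‖ₑ * U z
      ≤ ∫⁻ z in Ω, (‖dbar Q z‖ₑ * (U z * ‖z - p‖ₑ⁻¹) +
          a * B * ε * (ball p δ).indicator (fun z => ‖z - p‖ₑ⁻¹) z) := by
        refine lintegral_mono fun z =>
          (mul_le_mul_left (hη.enorm_dbar_smul_inv_sub_smul_le hQ z) (U z)).trans ?_
        by_cases hz : z ∈ ball p δ
        · simp only [Set.indicator_of_mem hz]
          calc ‖z - p‖ₑ⁻¹ * (‖dbar Q z‖ₑ + a * ‖Q z‖ₑ) * U z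
              = ‖dbar Q z‖ₑ * (U z * ‖z - p‖ₑ⁻¹) + a * ‖Q z‖ₑ * U z * ‖z - p‖ₑ⁻¹ := by ring
            _ ≤ _ := by gcongr; exacts [hQB z, hUε z hz]
        · simp only [Set.indicator_of_notMem hz]
          exact le_of_eq (by ring)
    _ ≤ (∫⁻ z in Ω, ‖dbar Q z‖ₑ * (U z * ‖z - p‖ₑ⁻¹)) +
          a * B * ε * ENNReal.ofReal (2 * Real.pi * δ) := by
        rw [lintegral_add_right _ (hmeas.const_mul _), lintegral_const_mul _ hmeas]
        gcongr
    _ = _ := by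
        have hLδ : a * ENNReal.ofReal (2 * Real.pi * δ) = ENNReal.ofReal (2 * Real.pi * L) := by
          rw [← ENNReal.ofReal_mul' (by positivity)]
          congr 1
          field_simp
        rw [← hLδ]
        ring

lemma HasDbarCarleman.lintegral_compl_ball_le {Ω : Set ℂ} {c B : ℝ≥0} {U : ℂ → ℝ≥0∞} {ε : ℝ≥0∞}
    (hU : HasDbarCarleman Ω c U) (hη : IsPunctureCutoff η p δ L) (hδ : 0 < δ)
    (hUε : ∀ z ∈ ball p δ, U z ≤ ε) (hQ : ContDiff ℝ 1 Q) (hQc : HasCompactSupport Q)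
    (hQΩ : tsupport Q ⊆ Ω) (hQB : ∀ z, ‖Q z‖ₑ ≤ B) :
    ∫⁻ z in (ball p δ)ᶜ, ‖Q z‖ₑ * (U z * ‖z - p‖ₑ⁻¹) ∂volume.restrict Ω ≤
      c * ((∫⁻ z in Ω, ‖dbar Q z‖ₑ * (U z * ‖z - p‖ₑ⁻¹))
        + B * ENNReal.ofReal (2 * Real.pi * L) * ε) := by
  set w : ℂ → ℂ := fun z => η z • (z - p)⁻¹ • Q z
  have hw : ContDiff ℝ 1 w := hη.contDiff_smul_inv_sub_smul hQ
  have hwQ : tsupport w ⊆ tsupport Q := closure_mono fun z hz => by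
    contrapose! hz
    simp_all [w]
  calc ∫⁻ z in (ball p δ)ᶜ, ‖Q z‖ₑ * (U z * ‖z - p‖ₑ⁻¹) ∂volume.restrict Ω
      ≤ ∫⁻ z in (ball p δ)ᶜ, ‖w z‖ₑ * U z ∂volume.restrict Ω :=
        setLIntegral_mono' measurableSet_ball.compl fun z hz => by
          have hηz : η z = 1 := hη.eq_one (not_lt.1 hz)
          have hzp : z - p ≠ 0 := sub_ne_zero.2 fun h => hz (h ▸ mem_ball_self hδ)
          simp only [w, hηz, one_smul, enorm_smul, enorm_inv hzp]
          exact le_of_eq (by ring)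
    _ ≤ ∫⁻ z in Ω, ‖w z‖ₑ * U z := setLIntegral_le_lintegral _ _
    _ ≤ c * ∫⁻ z in Ω, ‖dbar w z‖ₑ * U z :=
        hU w hw (hQc.mono' ((subset_tsupport w).trans hwQ)) (hwQ.trans hQΩ)
    _ ≤ _ := by
        gcongr
        exact hη.lintegral_enorm_dbar_smul_inv_sub_smul_mul_le hδ hUε hQ hQB

theorem HasDbarCarleman.mul_inv_enorm_sub {Ω : Set ℂ} {c : ℝ≥0} {U : ℂ → ℝ≥0∞}
    (hU : HasDbarCarleman Ω c U) (hp : Tendsto U (𝓝 p) (𝓝 0)) :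
    HasDbarCarleman Ω c fun z => U z * ‖z - p‖ₑ⁻¹ := by
  intro Q hQ hQc hQΩ
  obtain ⟨L, hL⟩ := exists_isPunctureCutoff ℂ
  obtain ⟨B, hB⟩ := exists_enorm_le_of_hasCompactSupport hQ.continuous hQc
  have hlim : Tendsto (fun ε : ℝ≥0∞ => c * ((∫⁻ z in Ω, ‖dbar Q z‖ₑ * (U z * ‖z - p‖ₑ⁻¹)) +
      B * ENNReal.ofReal (2 * Real.pi * L) * ε)) (𝓝[>] 0)
      (𝓝 (c * ∫⁻ z in Ω, ‖dbar Q z‖ₑ * (U z * ‖z - p‖ₑ⁻¹))) := by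
    have hK : B * ENNReal.ofReal (2 * Real.pi * L) ≠ ⊤ := by finiteness
    have hid : Tendsto id (𝓝[>] (0 : ℝ≥0∞)) (𝓝 0) := tendsto_id.mono_left nhdsWithin_le_nhds
    simpa using ENNReal.Tendsto.const_mul
      ((ENNReal.Tendsto.const_mul hid (.inr hK)).const_add _) (.inr ENNReal.coe_ne_top)
  refine ge_of_tendsto hlim ?_
  filter_upwards [self_mem_nhdsWithin] with ε hε
  obtain ⟨δ₀, hδ₀, hUδ₀⟩ := Metric.eventually_nhds_iff_ball.1 (hp.eventually_le_const hε)
  refine lintegral_le_of_frequently_compl_ball (p := p) (Eventually.frequently ?_)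
  filter_upwards [Ioo_mem_nhdsGT hδ₀] with δ hδ
  obtain ⟨η, hη⟩ := hL p hδ.1
  exact hU.lintegral_compl_ball_le hη hδ.1
    (fun z hz => hUδ₀ z (ball_subset_ball hδ.2.le hz)) hQ hQc hQΩ hB

lemma tendsto_mul_prod_inv_enorm_sub {U : ℂ → ℝ≥0∞} (hp : Tendsto U (𝓝 p) (𝓝 0)) {S : Finset ℂ}
    (hpS : p ∉ S) : Tendsto (fun z => U z * ∏ q ∈ S, ‖z - q‖ₑ⁻¹) (𝓝 p) (𝓝 0) := by
  induction S using Finset.induction_on with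
  | empty => simpa using hp
  | insert q S hqS ih =>
    rw [Finset.mem_insert, not_or] at hpS
    have hfactor : Tendsto (fun z => ‖z - q‖ₑ⁻¹) (𝓝 p) (𝓝 ‖p - q‖ₑ⁻¹) :=
      (by fun_prop : Continuous fun z => ‖z - q‖ₑ⁻¹).tendsto p
    simpa [Finset.prod_insert hqS, mul_assoc, mul_comm (∏ _ ∈ S, _)] using
      ENNReal.Tendsto.mul (ih hpS.2) (.inr (by simpa [sub_eq_zero] using hpS.1)) hfactor
        (.inr ENNReal.zero_ne_top)

lemma HasDbarCarleman.mul_prod_inv_enorm_sub {Ω : Set ℂ} {c : ℝ≥0} {U : ℂ → ℝ≥0∞}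
    (hU : HasDbarCarleman Ω c U) (S : Finset ℂ) (hS : ∀ p ∈ S, Tendsto U (𝓝 p) (𝓝 0)) :
    HasDbarCarleman Ω c fun z => U z * ∏ p ∈ S, ‖z - p‖ₑ⁻¹ := by
  induction S using Finset.induction_on with
  | empty => simpa using hU
  | insert p S hpS ih =>
    rw [Finset.forall_mem_insert] at hS
    simpa only [Finset.prod_insert hpS, mul_assoc, mul_comm (∏ _ ∈ S, _)] using
      (ih hS.2).mul_inv_enorm_sub (tendsto_mul_prod_inv_enorm_sub hS.1 hpS)

end Carleman

section CarlemanVanishing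

variable {x : ℂ} {r s R : ℝ} {c B : ℝ≥0} {U : ℂ → ℝ≥0∞}

lemma pow_card_le_prod_inv_enorm_sub {S : Finset ℂ} (hS : ∀ p ∈ S, p ∈ ball x r) {z : ℂ}
    (hz : z ∈ ball x r) :
    (ENNReal.ofReal (2 * r))⁻¹ ^ S.card ≤ ∏ p ∈ S, ‖z - p‖ₑ⁻¹ := by
  refine Finset.pow_card_le_prod S _ _ fun p hp => ENNReal.inv_le_inv.2 ?_
  rw [← ofReal_norm, ← dist_eq_norm]
  exact ENNReal.ofReal_le_ofReal
    (by linarith [dist_triangle_right z p x, mem_ball.1 hz, mem_ball.1 (hS p hp)])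

lemma prod_inv_enorm_sub_le_pow_card {S : Finset ℂ} (hS : ∀ p ∈ S, p ∈ ball x r) {z : ℂ}
    (hz : z ∉ ball x s) :
    ∏ p ∈ S, ‖z - p‖ₑ⁻¹ ≤ (ENNReal.ofReal (s - r))⁻¹ ^ S.card := by
  refine Finset.prod_le_pow_card S _ _ fun p hp => ENNReal.inv_le_inv.2 ?_
  rw [← ofReal_norm, ← dist_eq_norm]
  exact ENNReal.ofReal_le_ofReal
    (by linarith [dist_triangle z p x, not_lt.1 (mem_ball.not.1 hz), mem_ball.1 (hS p hp)])

lemma exists_contDiff_eqOn_one_ball (x : ℂ) (hs : 0 < s) (hsR : s < R) :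
    ∃ (Q : ℂ → ℂ) (B : ℝ≥0), ContDiff ℝ 1 Q ∧ HasCompactSupport Q ∧ tsupport Q ⊆ ball x R ∧
      Set.EqOn Q 1 (ball x s) ∧ ∀ z, ‖dbar Q z‖ₑ ≤ B := by
  obtain ⟨t, hst, htR⟩ := exists_between hsR
  let b : ContDiffBump x := ⟨s, t, hs, hst⟩
  have hQ : ContDiff ℝ 1 fun z => (b z : ℂ) := Complex.ofRealCLM.contDiff.comp b.contDiff
  have hsupp : tsupport (fun z => (b z : ℂ)) ⊆ closedBall x t :=
    b.tsupport_eq ▸ tsupport_comp_subset Complex.ofReal_zero b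
  have hQc : HasCompactSupport fun z => (b z : ℂ) :=
    (isCompact_closedBall x t).of_isClosed_subset (isClosed_tsupport _) hsupp
  obtain ⟨B, hB⟩ := exists_enorm_le_of_hasCompactSupport (hQ.continuous_fderiv one_ne_zero)
    (hQc.fderiv ℝ)
  refine ⟨fun z => b z, B, hQ, hQc, hsupp.trans (closedBall_subset_ball htR),
    fun z hz => by simp [b.one_of_mem_closedBall (ball_subset_closedBall hz)], fun z => ?_⟩
  exact (enorm_le_iff_norm_le.2 (norm_dbar_le _ z)).trans (hB z)

lemma lintegral_enorm_dbar_mul_prod_le {Q : ℂ → ℂ} (hQ1 : Set.EqOn Q 1 (ball x s))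
    (hQB : ∀ z, ‖dbar Q z‖ₑ ≤ B) (hrs : r < s) {S : Finset ℂ} (hS : ∀ p ∈ S, p ∈ ball x r) :
    ∫⁻ z in ball x R, ‖dbar Q z‖ₑ * (U z * ∏ p ∈ S, ‖z - p‖ₑ⁻¹) ≤
      B * (ENNReal.ofReal (s - r))⁻¹ ^ S.card * ∫⁻ z in ball x R, U z := by
  have hsr : (ENNReal.ofReal (s - r))⁻¹ ≠ ⊤ := by simpa using hrs
  rw [← lintegral_const_mul' _ _ (ENNReal.mul_ne_top (by simp) (ENNReal.pow_ne_top hsr))]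
  refine lintegral_mono fun z => ?_
  by_cases hz : z ∈ ball x s
  · have hconst : Q =ᶠ[𝓝 z] fun _ => 1 := hQ1.eventuallyEq_of_mem (isOpen_ball.mem_nhds hz)
    rw [dbar_congr_of_eventuallyEq hconst,
      dbar_eq_zero_of_differentiableAt (differentiableAt_const _), enorm_zero, zero_mul]
    exact zero_le
  · calc ‖dbar Q z‖ₑ * (U z * ∏ p ∈ S, ‖z - p‖ₑ⁻¹)
        ≤ B * (U z * (ENNReal.ofReal (s - r))⁻¹ ^ S.card) := by
          gcongr
          exacts [hQB z, prod_inv_enorm_sub_le_pow_card hS hz]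
      _ = B * (ENNReal.ofReal (s - r))⁻¹ ^ S.card * U z := by ring

lemma HasDbarCarleman.lintegral_ball_le {Q : ℂ → ℂ} (hU : HasDbarCarleman (ball x R) c U)
    (hQ : ContDiff ℝ 1 Q) (hQc : HasCompactSupport Q) (hQR : tsupport Q ⊆ ball x R)
    (hQ1 : Set.EqOn Q 1 (ball x s)) (hQB : ∀ z, ‖dbar Q z‖ₑ ≤ B) (hr : 0 < r) (hrs : r < s)
    (hsR : s ≤ R) {S : Finset ℂ} (hSr : ∀ p ∈ S, p ∈ ball x r)
    (hS : ∀ p ∈ S, Tendsto U (𝓝 p) (𝓝 0)) :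
    ∫⁻ z in ball x r, U z ≤ c * B * (∫⁻ z in ball x R, U z) *
      (ENNReal.ofReal (2 * r) / ENNReal.ofReal (s - r)) ^ S.card := by
  have hr0 : (ENNReal.ofReal (2 * r)) ^ S.card ≠ 0 := pow_ne_zero _ (by simpa using hr)
  have hrtop : (ENNReal.ofReal (2 * r)) ^ S.card ≠ ⊤ := by finiteness
  have hlower : ((ENNReal.ofReal (2 * r)) ^ S.card)⁻¹ * ∫⁻ z in ball x r, U z ≤
      ∫⁻ z in ball x R, ‖Q z‖ₑ * (U z * ∏ p ∈ S, ‖z - p‖ₑ⁻¹) := by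
    rw [← lintegral_const_mul' _ _ (ENNReal.inv_ne_top.2 hr0)]
    refine (setLIntegral_mono' measurableSet_ball fun z hz => ?_).trans
      (lintegral_mono_set (ball_subset_ball (hrs.le.trans hsR)))
    rw [hQ1 (ball_subset_ball hrs.le hz), Pi.one_apply, enorm_one, one_mul, mul_comm,
      ENNReal.inv_pow]
    gcongr
    exact pow_card_le_prod_inv_enorm_sub hSr hz
  calc ∫⁻ z in ball x r, U z
      = (ENNReal.ofReal (2 * r)) ^ S.card *
          (((ENNReal.ofReal (2 * r)) ^ S.card)⁻¹ * ∫⁻ z in ball x r, U z) := by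
        rw [← mul_assoc, ENNReal.mul_inv_cancel hr0 hrtop, one_mul]
    _ ≤ (ENNReal.ofReal (2 * r)) ^ S.card *
          (c * ∫⁻ z in ball x R, ‖dbar Q z‖ₑ * (U z * ∏ p ∈ S, ‖z - p‖ₑ⁻¹)) :=
        mul_le_mul_right
          (hlower.trans (hU.mul_prod_inv_enorm_sub S hS Q hQ hQc hQR)) _
    _ ≤ (ENNReal.ofReal (2 * r)) ^ S.card *
          (c * (B * (ENNReal.ofReal (s - r))⁻¹ ^ S.card * ∫⁻ z in ball x R, U z)) := by
        gcongr _ * (_ * ?_)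
        exact lintegral_enorm_dbar_mul_prod_le hQ1 hQB hrs hSr
    _ = _ := by
        rw [div_eq_mul_inv, mul_pow]
        ring

theorem HasDbarCarleman.lintegral_ball_eq_zero (hU : HasDbarCarleman (ball x R) c U)
    (hfin : ∫⁻ z in ball x R, U z ≠ ⊤) (hrR : 3 * r < R)
    (hZ : {p ∈ ball x r | Tendsto U (𝓝 p) (𝓝 0)}.Infinite) : ∫⁻ z in ball x r, U z = 0 := by
  have hr : 0 < r := pos_of_mem_ball hZ.nonempty.choose_spec.1
  obtain ⟨s, hrs, hsR⟩ := exists_between hrR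
  obtain ⟨Q, B, hQ, hQc, hQR, hQ1, hQB⟩ :=
    exists_contDiff_eqOn_one_ball x (by linarith : 0 < s) hsR
  have hratio : ENNReal.ofReal (2 * r) / ENNReal.ofReal (s - r) < 1 :=
    ENNReal.div_lt_of_lt_mul' (by
      rw [mul_one]
      exact (ENNReal.ofReal_lt_ofReal_iff (by linarith)).2 (by linarith))
  have hlim : Tendsto (fun n : ℕ => c * B * (∫⁻ z in ball x R, U z) *
      (ENNReal.ofReal (2 * r) / ENNReal.ofReal (s - r)) ^ n) atTop (𝓝 0) := by
    simpa using ENNReal.Tendsto.const_mul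
      (ENNReal.tendsto_pow_atTop_nhds_zero_of_lt_one hratio) (.inr (by finiteness))
  refine le_antisymm (ge_of_tendsto' hlim fun n => ?_) zero_le
  obtain ⟨S, hSZ, rfl⟩ := hZ.exists_subset_card_eq n
  exact hU.lintegral_ball_le hQ hQc hQR hQ1 hQB hr (by linarith) hsR.le (fun p hp => (hSZ hp).1)
    fun p hp => (hSZ hp).2

end CarlemanVanishing

section CarlemanOfDbarLe

variable {E : Type*} [NormedAddCommGroup E]

lemma tendsto_setLIntegral_norm_lt {X : Type*} [MeasurableSpace X] {μ : Measure X}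
    [IsFiniteMeasure μ] {u : X → E} (hu : AEStronglyMeasurable u μ) {f : X → ℝ≥0∞}
    (hf : ∫⁻ x in {x | u x ≠ 0}, f x ∂μ ≠ ⊤) :
    Tendsto (fun ρ : ℝ => ∫⁻ x in {x | u x ≠ 0 ∧ ‖u x‖ < ρ}, f x ∂μ) (𝓝[>] 0) (𝓝 0) := by
  have hlt (ρ : ℝ) : NullMeasurableSet {x | ‖u x‖ < ρ} μ :=
    hu.norm.aemeasurable.nullMeasurable measurableSet_Iio
  have hne : NullMeasurableSet {x | u x ≠ 0} μ := by
    have hcompl : {x | u x ≠ 0} = ((fun x => ‖u x‖) ⁻¹' {0})ᶜ := by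
      ext
      simp
    rw [hcompl]
    exact (hu.norm.aemeasurable.nullMeasurable (measurableSet_singleton 0)).compl
  have hinter : ⋂ ρ : ℝ, ⋂ (_ : ρ > 0), {x | ‖u x‖ < ρ} = {x | u x = 0} := by
    ext x
    simp only [Set.mem_iInter, Set.mem_ofPred_eq]
    exact ⟨fun h => norm_le_zero_iff.1 (le_of_forall_gt h), fun h ρ hρ => by simpa [h] using hρ⟩
  have hnull : μ.restrict {x | u x ≠ 0} {x | u x = 0} = 0 := by
    rw [Measure.restrict_apply₀' hne]
    convert measure_empty (μ := μ)
    ext x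
    simp
  have hlim := tendsto_measure_biInter_gt (μ := μ.restrict {x | u x ≠ 0})
    (s := fun ρ : ℝ => {x | ‖u x‖ < ρ}) (a := 0)
    (fun ρ _ => (hlt ρ).mono Measure.restrict_le_self)
    (fun i j _ hij x (hx : ‖u x‖ < i) => hx.trans_le hij) ⟨1, one_pos, measure_ne_top _ _⟩
  rw [hinter, hnull] at hlim
  refine (tendsto_setLIntegral_zero hf hlim).congr fun ρ => ?_
  rw [Measure.restrict_restrict₀' hne, Set.inter_comm]
  rfl

variable [NormedSpace ℂ E] {u : ℂ → E} {η : E → ℝ} {z : ℂ} {ρ L : ℝ} {M : ℝ≥0}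

lemma IsPunctureCutoff.contDiffAt_comp_smul (hη : IsPunctureCutoff η 0 ρ L)
    (hcont : ContinuousAt u z) (hdiff : u z ≠ 0 → ContDiffAt ℝ 1 u z) :
    ContDiffAt ℝ 1 (fun w => η (u w) • u w) z := by
  by_cases hz : u z = 0
  · refine (contDiffAt_const (c := (0 : E))).congr_of_eventuallyEq ?_
    filter_upwards [(hz ▸ hcont.tendsto).eventually hη.eventuallyEq_zero] with w hw
    simp [hw]
  · exact (hη.contDiff.contDiffAt.comp z (hdiff hz)).smul (hdiff hz)

lemma IsPunctureCutoff.enorm_fderiv_comp_mul_enorm_le (hη : IsPunctureCutoff η 0 ρ L) (hρ : 0 < ρ)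
    (hz : u z ≠ 0) (hu : DifferentiableAt ℝ u z) :
    ‖fderiv ℝ (fun w => η (u w)) z‖ₑ * ‖u z‖ₑ ≤
      {w | u w ≠ 0 ∧ ‖u w‖ < ρ}.indicator (fun w => ENNReal.ofReal L * ‖fderiv ℝ u w‖ₑ) z := by
  rw [fderiv_fun_comp z (hη.contDiff.differentiable one_ne_zero _) hu]
  by_cases hzρ : ‖u z‖ < ρ
  · rw [Set.indicator_of_mem (s := {w | u w ≠ 0 ∧ ‖u w‖ < ρ}) ⟨hz, hzρ⟩]
    calc ‖fderiv ℝ η (u z) ∘L fderiv ℝ u z‖ₑ * ‖u z‖ₑ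
        ≤ ENNReal.ofReal (L / ρ) * ‖fderiv ℝ u z‖ₑ * ENNReal.ofReal ρ := by
          gcongr
          · refine (ContinuousLinearMap.opENorm_comp_le _ _).trans ?_
            gcongr
            exact (ofReal_norm _).symm.trans_le (ENNReal.ofReal_le_ofReal (hη.norm_fderiv_le _))
          · exact (ofReal_norm _).symm.trans_le (ENNReal.ofReal_le_ofReal hzρ.le)
      _ = ENNReal.ofReal L * ‖fderiv ℝ u z‖ₑ := by
          rw [mul_right_comm, ← ENNReal.ofReal_mul' hρ.le, div_mul_cancel₀ L hρ.ne']
  · rw [hη.fderiv_eq_zero (by simpa using hzρ), ContinuousLinearMap.zero_comp, ← ofReal_norm,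
      norm_zero, ENNReal.ofReal_zero, zero_mul]
    exact zero_le

lemma IsPunctureCutoff.enorm_dbar_comp_smul_le (hη : IsPunctureCutoff η 0 ρ L) (hρ : 0 < ρ)
    (hcont : ContinuousAt u z) (hdiff : u z ≠ 0 → ContDiffAt ℝ 1 u z)
    (hdbar : u z ≠ 0 → ‖dbar u z‖ₑ ≤ M * ‖u z‖ₑ) :
    ‖dbar (fun w => η (u w) • u w) z‖ₑ ≤ M * ‖u z‖ₑ +
      {w | u w ≠ 0 ∧ ‖u w‖ < ρ}.indicator (fun w => ENNReal.ofReal L * ‖fderiv ℝ u w‖ₑ) z := by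
  by_cases hz : u z = 0
  · rw [dbar_congr_of_eventuallyEq (g := fun _ => 0), dbar_eq_zero_of_differentiableAt
      (differentiableAt_const _), enorm_zero]
    · exact zero_le
    · filter_upwards [(hz ▸ hcont.tendsto).eventually hη.eventuallyEq_zero] with w hw
      simp [hw]
  have hu : DifferentiableAt ℝ u z := (hdiff hz).differentiableAt one_ne_zero
  have hηu : DifferentiableAt ℝ (fun w => η (u w)) z :=
    (hη.contDiff.differentiable one_ne_zero _).comp z hu
  refine (enorm_dbar_real_smul_le hηu hu).trans ?_
  rw [← one_mul ((M : ℝ≥0∞) * _)]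
  gcongr
  exacts [hη.enorm_le_one _, hdbar hz, hη.enorm_fderiv_comp_mul_enorm_le hρ hz hu]

lemma IsPunctureCutoff.enorm_le_enorm_smul_add (hη : IsPunctureCutoff η 0 ρ L) (y : E) :
    ‖y‖ₑ ≤ ‖η y • y‖ₑ + ENNReal.ofReal ρ := by
  by_cases hy : ‖y‖ < ρ
  · rw [← ofReal_norm]
    exact (ENNReal.ofReal_le_ofReal hy.le).trans le_add_self
  · rw [hη.eq_one (by simpa using hy), one_smul]
    exact le_self_add

lemma contDiff_smul_of_tsupport {Q : ℂ → ℂ} {w : ℂ → E} (hQ : ContDiff ℝ 1 Q)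
    (hw : ∀ z ∈ tsupport Q, ContDiffAt ℝ 1 w z) : ContDiff ℝ 1 fun z => Q z • w z := by
  refine contDiff_iff_contDiffAt.2 fun z => ?_
  by_cases hz : z ∈ tsupport Q
  · exact hQ.contDiffAt.smul (hw z hz)
  · refine (contDiffAt_const (c := (0 : E))).congr_of_eventuallyEq ?_
    filter_upwards [notMem_tsupport_iff_eventuallyEq.1 hz] with y hy
    simp [hy]

lemma IsPunctureCutoff.enorm_dbar_smul_comp_smul_le (hη : IsPunctureCutoff η 0 ρ L) (hρ : 0 < ρ)
    (hcont : ContinuousAt u z) (hdiff : u z ≠ 0 → ContDiffAt ℝ 1 u z)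
    (hdbar : u z ≠ 0 → ‖dbar u z‖ₑ ≤ M * ‖u z‖ₑ) {Q : ℂ → ℂ} {B : ℝ≥0}
    (hQ : DifferentiableAt ℝ Q z) (hQB : ‖Q z‖ₑ ≤ B) :
    ‖dbar (fun w => Q w • η (u w) • u w) z‖ₑ ≤ ‖dbar Q z‖ₑ * ‖u z‖ₑ + M * (‖Q z‖ₑ * ‖u z‖ₑ) +
      B * {w | u w ≠ 0 ∧ ‖u w‖ < ρ}.indicator (fun w => ENNReal.ofReal L * ‖fderiv ℝ u w‖ₑ) z := by
  set S : Set ℂ := {w | u w ≠ 0 ∧ ‖u w‖ < ρ}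
  have hw := (hη.contDiffAt_comp_smul hcont hdiff).differentiableAt one_ne_zero
  calc ‖dbar (fun w => Q w • η (u w) • u w) z‖ₑ
      ≤ ‖Q z‖ₑ * ‖dbar (fun w => η (u w) • u w) z‖ₑ + ‖dbar Q z‖ₑ * (‖η (u z)‖ₑ * ‖u z‖ₑ) := by
        rw [dbar_smul hQ hw, ← enorm_smul, ← enorm_smul, ← enorm_smul]
        exact enorm_add_le _ _
    _ ≤ ‖Q z‖ₑ * (M * ‖u z‖ₑ + S.indicator (fun w => ENNReal.ofReal L * ‖fderiv ℝ u w‖ₑ) z) +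
          ‖dbar Q z‖ₑ * (1 * ‖u z‖ₑ) := by
        gcongr
        exacts [hη.enorm_dbar_comp_smul_le hρ hcont hdiff hdbar, hη.enorm_le_one _]
    _ = ‖dbar Q z‖ₑ * ‖u z‖ₑ + M * (‖Q z‖ₑ * ‖u z‖ₑ) +
          ‖Q z‖ₑ * S.indicator (fun w => ENNReal.ofReal L * ‖fderiv ℝ u w‖ₑ) z := by ring
    _ ≤ _ := by gcongr

variable {x : ℂ} {R : ℝ}

lemma IsPunctureCutoff.lintegral_mul_enorm_comp_smul_le [CompleteSpace E]
    (hη : IsPunctureCutoff η 0 ρ L) (hρ : 0 < ρ) (hcont : ContinuousOn u (ball x R))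
    (hdiff : ∀ z ∈ ball x R, u z ≠ 0 → ContDiffAt ℝ 1 u z)
    (hdbar : ∀ z ∈ ball x R, u z ≠ 0 → ‖dbar u z‖ₑ ≤ M * ‖u z‖ₑ) {Q : ℂ → ℂ} {B : ℝ≥0}
    (hQ : ContDiff ℝ 1 Q) (hQR : tsupport Q ⊆ ball x R) (hQB : ∀ z, ‖Q z‖ₑ ≤ B) :
    ∫⁻ z in ball x R, ‖Q z‖ₑ * ‖η (u z) • u z‖ₑ ≤ ENNReal.ofReal (4 * R) *
      ((∫⁻ z in ball x R, ‖dbar Q z‖ₑ * ‖u z‖ₑ) + M * (∫⁻ z in ball x R, ‖Q z‖ₑ * ‖u z‖ₑ) +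
        B * (ENNReal.ofReal L *
          ∫⁻ z in {z | u z ≠ 0 ∧ ‖u z‖ < ρ}, ‖fderiv ℝ u z‖ₑ ∂volume.restrict (ball x R))) := by
  have hcontAt : ∀ z ∈ ball x R, ContinuousAt u z := fun z hz =>
    hcont.continuousAt (isOpen_ball.mem_nhds hz)
  have hQw : ContDiff ℝ 1 fun z => Q z • η (u z) • u z := contDiff_smul_of_tsupport hQ fun z hz =>
    hη.contDiffAt_comp_smul (hcontAt z (hQR hz)) (hdiff z (hQR hz))
  have hu : AEMeasurable (fun z => ‖u z‖ₑ) (volume.restrict (ball x R)) :=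
    (hcont.aestronglyMeasurable measurableSet_ball).enorm
  have hQu : AEMeasurable (fun z => ‖Q z‖ₑ * ‖u z‖ₑ) (volume.restrict (ball x R)) :=
    hQ.continuous.enorm.aemeasurable.mul hu
  have hdQu : AEMeasurable (fun z => ‖dbar Q z‖ₑ * ‖u z‖ₑ) (volume.restrict (ball x R)) :=
    (continuous_dbar hQ).enorm.aemeasurable.mul hu
  have hsum : AEMeasurable (fun z => ‖dbar Q z‖ₑ * ‖u z‖ₑ + M * (‖Q z‖ₑ * ‖u z‖ₑ))
      (volume.restrict (ball x R)) := hdQu.add (hQu.const_mul _)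
  calc ∫⁻ z in ball x R, ‖Q z‖ₑ * ‖η (u z) • u z‖ₑ
      = ∫⁻ z in ball x R, ‖Q z • η (u z) • u z‖ₑ := by
        simp only [enorm_smul (Q _)]
    _ ≤ ENNReal.ofReal (4 * R) * ∫⁻ z in ball x R, ‖dbar (fun y => Q y • η (u y) • u y) z‖ₑ :=
        lintegral_enorm_le_lintegral_dbar hQw ((tsupport_smul_subset_left Q _).trans hQR)
    _ ≤ ENNReal.ofReal (4 * R) * ∫⁻ z in ball x R, (‖dbar Q z‖ₑ * ‖u z‖ₑ +
          M * (‖Q z‖ₑ * ‖u z‖ₑ) + B * {z | u z ≠ 0 ∧ ‖u z‖ < ρ}.indicator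
            (fun z => ENNReal.ofReal L * ‖fderiv ℝ u z‖ₑ) z) := by
        gcongr 1
        exact setLIntegral_mono' measurableSet_ball fun z hz =>
          hη.enorm_dbar_smul_comp_smul_le hρ (hcontAt z hz) (hdiff z hz) (hdbar z hz)
            (hQ.differentiable one_ne_zero z) (hQB z)
    _ ≤ _ := by
        rw [lintegral_add_left' hsum, lintegral_add_left' hdQu,
          lintegral_const_mul' _ _ ENNReal.coe_ne_top, lintegral_const_mul' _ _ ENNReal.coe_ne_top,
          ← lintegral_const_mul' _ _ ENNReal.ofReal_ne_top]
        gcongr _ * (_ + _ * ?_)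
        exact lintegral_indicator_le _ _

lemma IsPunctureCutoff.lintegral_mul_enorm_le [CompleteSpace E]
    (hη : IsPunctureCutoff η 0 ρ L) (hρ : 0 < ρ) (hcont : ContinuousOn u (ball x R))
    (hdiff : ∀ z ∈ ball x R, u z ≠ 0 → ContDiffAt ℝ 1 u z)
    (hdbar : ∀ z ∈ ball x R, u z ≠ 0 → ‖dbar u z‖ₑ ≤ M * ‖u z‖ₑ) {Q : ℂ → ℂ} {B : ℝ≥0}
    (hQ : ContDiff ℝ 1 Q) (hQR : tsupport Q ⊆ ball x R) (hQB : ∀ z, ‖Q z‖ₑ ≤ B) :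
    ∫⁻ z in ball x R, ‖Q z‖ₑ * ‖u z‖ₑ ≤ ENNReal.ofReal (4 * R) *
      ((∫⁻ z in ball x R, ‖dbar Q z‖ₑ * ‖u z‖ₑ) + M * (∫⁻ z in ball x R, ‖Q z‖ₑ * ‖u z‖ₑ) +
        B * (ENNReal.ofReal L *
          ∫⁻ z in {z | u z ≠ 0 ∧ ‖u z‖ < ρ}, ‖fderiv ℝ u z‖ₑ ∂volume.restrict (ball x R))) +
      B * volume (ball x R) * ENNReal.ofReal ρ :=
  calc ∫⁻ z in ball x R, ‖Q z‖ₑ * ‖u z‖ₑ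
      ≤ ∫⁻ z in ball x R, (‖Q z‖ₑ * ‖η (u z) • u z‖ₑ + B * ENNReal.ofReal ρ) := by
        refine lintegral_mono fun z => ?_
        calc ‖Q z‖ₑ * ‖u z‖ₑ ≤ ‖Q z‖ₑ * (‖η (u z) • u z‖ₑ + ENNReal.ofReal ρ) := by
              gcongr
              exact hη.enorm_le_enorm_smul_add (u z)
          _ ≤ ‖Q z‖ₑ * ‖η (u z) • u z‖ₑ + B * ENNReal.ofReal ρ := by
              rw [mul_add]
              gcongr
              exact hQB z
    _ ≤ _ := by
        rw [lintegral_add_right _ measurable_const, setLIntegral_const, mul_right_comm]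
        gcongr
        exact hη.lintegral_mul_enorm_comp_smul_le hρ hcont hdiff hdbar hQ hQR hQB

lemma lintegral_mul_enorm_le_of_enorm_dbar_le [FiniteDimensional ℂ E]
    (hcont : ContinuousOn u (ball x R))
    (hdiff : ∀ z ∈ ball x R, u z ≠ 0 → ContDiffAt ℝ 1 u z)
    (hdbar : ∀ z ∈ ball x R, u z ≠ 0 → ‖dbar u z‖ₑ ≤ M * ‖u z‖ₑ)
    (hfderiv : ∫⁻ z in {z | u z ≠ 0}, ‖fderiv ℝ u z‖ₑ ∂volume.restrict (ball x R) ≠ ⊤)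
    {Q : ℂ → ℂ} (hQ : ContDiff ℝ 1 Q) (hQc : HasCompactSupport Q) (hQR : tsupport Q ⊆ ball x R) :
    ∫⁻ z in ball x R, ‖Q z‖ₑ * ‖u z‖ₑ ≤ ENNReal.ofReal (4 * R) *
      ((∫⁻ z in ball x R, ‖dbar Q z‖ₑ * ‖u z‖ₑ) +
        M * ∫⁻ z in ball x R, ‖Q z‖ₑ * ‖u z‖ₑ) := by
  have : CompleteSpace E := FiniteDimensional.complete ℂ E
  have : FiniteDimensional ℝ E := FiniteDimensional.complexToReal E
  have : IsFiniteMeasure (volume.restrict (ball x R)) :=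
    isFiniteMeasure_restrict.2 measure_ball_lt_top.ne
  obtain ⟨L, hL⟩ := exists_isPunctureCutoff E
  obtain ⟨B, hB⟩ := exists_enorm_le_of_hasCompactSupport hQ.continuous hQc
  have hnear := tendsto_setLIntegral_norm_lt (hcont.aestronglyMeasurable measurableSet_ball) hfderiv
  have hρ : Tendsto ENNReal.ofReal (𝓝[>] 0) (𝓝 0) :=
    (ENNReal.continuous_ofReal.tendsto' 0 0 ENNReal.ofReal_zero).mono_left nhdsWithin_le_nhds
  have hV : B * volume (ball x R) ≠ ⊤ :=
    ENNReal.mul_ne_top ENNReal.coe_ne_top measure_ball_lt_top.ne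
  set T := (∫⁻ z in ball x R, ‖dbar Q z‖ₑ * ‖u z‖ₑ) + M * ∫⁻ z in ball x R, ‖Q z‖ₑ * ‖u z‖ₑ
  have hlim := (ENNReal.Tendsto.const_mul ((ENNReal.Tendsto.const_mul
    (ENNReal.Tendsto.const_mul hnear (.inr (ENNReal.ofReal_ne_top (r := L))))
      (.inr (ENNReal.coe_ne_top (r := B)))).const_add T)
    (.inr (ENNReal.ofReal_ne_top (r := 4 * R)))).add (ENNReal.Tendsto.const_mul hρ (.inr hV))
  rw [mul_zero, mul_zero, mul_zero, add_zero, add_zero] at hlim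
  refine ge_of_tendsto hlim (eventually_mem_nhdsWithin.mono fun ρ hρ => ?_)
  obtain ⟨η, hη⟩ := hL (0 : E) hρ
  exact hη.lintegral_mul_enorm_le hρ hcont hdiff hdbar hQ hQR hB

theorem hasDbarCarleman_enorm_of_enorm_dbar_le [FiniteDimensional ℂ E]
    (hcont : ContinuousOn u (ball x R))
    (hdiff : ∀ z ∈ ball x R, u z ≠ 0 → ContDiffAt ℝ 1 u z)
    (hdbar : ∀ z ∈ ball x R, u z ≠ 0 → ‖dbar u z‖ₑ ≤ M * ‖u z‖ₑ)
    (hfderiv : ∫⁻ z in {z | u z ≠ 0}, ‖fderiv ℝ u z‖ₑ ∂volume.restrict (ball x R) ≠ ⊤)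
    (hint : ∫⁻ z in ball x R, ‖u z‖ₑ ≠ ⊤) (hRM : 8 * R * M ≤ 1) :
    HasDbarCarleman (ball x R) (8 * R).toNNReal fun z => ‖u z‖ₑ := by
  intro Q hQ hQc hQR
  obtain ⟨B, hB⟩ := exists_enorm_le_of_hasCompactSupport hQ.continuous hQc
  have hfin : ∫⁻ z in ball x R, ‖Q z‖ₑ * ‖u z‖ₑ ≠ ⊤ := by
    refine ne_top_of_le_ne_top (ENNReal.mul_ne_top (ENNReal.coe_ne_top (r := B)) hint) ?_
    rw [← lintegral_const_mul' _ _ ENNReal.coe_ne_top]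
    exact lintegral_mono fun z => mul_le_mul_left (hB z) _
  have hκ : ENNReal.ofReal (8 * R) = 2 * ENNReal.ofReal (4 * R) := by
    rw [← ENNReal.ofReal_ofNat, ← ENNReal.ofReal_mul zero_le_two]
    ring_nf
  have hκM : 2 * ENNReal.ofReal (4 * R) * M ≤ 1 := by
    rw [← hκ, ← ENNReal.ofReal_coe_nnreal, ← ENNReal.ofReal_mul' M.coe_nonneg]
    exact ENNReal.ofReal_le_one.2 hRM
  have hle := lintegral_mul_enorm_le_of_enorm_dbar_le hcont hdiff hdbar hfderiv hQ hQc hQR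
  set A := ∫⁻ z in ball x R, ‖Q z‖ₑ * ‖u z‖ₑ
  set D := ∫⁻ z in ball x R, ‖dbar Q z‖ₑ * ‖u z‖ₑ
  rw [← ENNReal.ofReal, hκ]
  refine (ENNReal.add_le_add_iff_left hfin).1 ?_
  calc A + A = 2 * A := (two_mul A).symm
    _ ≤ 2 * (ENNReal.ofReal (4 * R) * (D + M * A)) := by gcongr
    _ = 2 * ENNReal.ofReal (4 * R) * M * A + 2 * ENNReal.ofReal (4 * R) * D := by ring
    _ ≤ 1 * A + 2 * ENNReal.ofReal (4 * R) * D := by gcongr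
    _ = A + 2 * ENNReal.ofReal (4 * R) * D := by rw [one_mul]

end CarlemanOfDbarLe

section UniqueContinuation

variable {E : Type*} [NormedAddCommGroup E] [NormedSpace ℂ E] [FiniteDimensional ℂ E]
  {u : ℂ → E} {x : ℂ} {M : ℝ≥0}

lemma eqOn_zero_of_enorm_dbar_le {r R : ℝ} (hcont : ContinuousOn u (ball x R))
    (hdiff : ∀ z ∈ ball x R, u z ≠ 0 → ContDiffAt ℝ 1 u z)
    (hdbar : ∀ z ∈ ball x R, u z ≠ 0 → ‖dbar u z‖ₑ ≤ M * ‖u z‖ₑ)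
    (hfderiv : ∫⁻ z in {z | u z ≠ 0}, ‖fderiv ℝ u z‖ₑ ∂volume.restrict (ball x R) ≠ ⊤)
    (hint : ∫⁻ z in ball x R, ‖u z‖ₑ ≠ ⊤) (hRM : 8 * R * M ≤ 1) (hrR : 3 * r < R)
    (hzero : {z ∈ ball x r | u z = 0}.Infinite) :
    Set.EqOn u 0 (ball x r) := by
  rcases le_or_gt r 0 with hr | hr
  · simp [ball_eq_empty.2 hr]
  have hsub : ball x r ⊆ ball x R := ball_subset_ball (by linarith)
  have hu : AEStronglyMeasurable u (volume.restrict (ball x r)) :=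
    (hcont.mono hsub).aestronglyMeasurable measurableSet_ball
  have hlint := (hasDbarCarleman_enorm_of_enorm_dbar_le hcont hdiff hdbar hfderiv hint
    hRM).lintegral_ball_eq_zero hint hrR <| hzero.mono fun p hp => ⟨hp.1, by
      simpa [hp.2] using (hcont.continuousAt (isOpen_ball.mem_nhds (hsub hp.1))).enorm.tendsto⟩
  refine Measure.eqOn_open_of_ae_eq (μ := volume) ?_ isOpen_ball (hcont.mono hsub)
    continuousOn_const
  filter_upwards [(lintegral_eq_zero_iff' hu.enorm).1 hlint] with z hz
  exact enorm_eq_zero.1 hz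

theorem eventually_eq_zero_of_enorm_dbar_le (hcont : ∀ᶠ z in 𝓝 x, ContinuousAt u z)
    (hdiff : ∀ᶠ z in 𝓝 x, u z ≠ 0 → ContDiffAt ℝ 1 u z)
    (hdbar : ∀ᶠ z in 𝓝 x, u z ≠ 0 → ‖dbar u z‖ₑ ≤ M * ‖u z‖ₑ)
    (hfderiv : IntegrableAtFilter (fderiv ℝ u) (𝓝[{z | u z ≠ 0}] x))
    (hzero : ∃ᶠ z in 𝓝[≠] x, u z = 0) : ∀ᶠ z in 𝓝 x, u z = 0 := by
  obtain ⟨s, hs, hint⟩ := hfderiv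
  have hbdd : ∀ᶠ z in 𝓝 x, ‖u z‖ₑ ≤ ‖u x‖ₑ + 1 :=
    (hcont.self_of_nhds.enorm.tendsto.eventually_le_const
      (ENNReal.lt_add_right enorm_ne_top one_ne_zero))
  obtain ⟨R₀, hR₀, hball⟩ := Metric.eventually_nhds_iff_ball.1
    (hcont.and (hdiff.and (hdbar.and (hbdd.and (eventually_nhdsWithin_iff.1 hs)))))
  have hlim : Tendsto (fun R : ℝ => 8 * R * M) (𝓝[>] 0) (𝓝 0) :=
    (Continuous.tendsto' (by fun_prop) 0 0 (by simp)).mono_left nhdsWithin_le_nhds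
  obtain ⟨R, hRM, hR, hRR₀⟩ := ((hlim.eventually_le_const one_pos).and (Ioc_mem_nhdsGT hR₀)).exists
  have hr : 0 < R / 4 := by positivity
  have hsub : ball x R ⊆ ball x R₀ := ball_subset_ball hRR₀
  choose hcont hdiff hdbar hbdd hs using hball
  have hu : ∫⁻ z in ball x R, ‖u z‖ₑ ≠ ⊤ := by
    refine ne_top_of_le_ne_top (b := ∫⁻ _ in ball x R, (‖u x‖ₑ + 1)) ?_
      (setLIntegral_mono' measurableSet_ball fun z hz => hbdd z (hsub hz))
    rw [setLIntegral_const]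
    exact ENNReal.mul_ne_top (by finiteness) measure_ball_lt_top.ne
  have hfderiv : ∫⁻ z in {z | u z ≠ 0}, ‖fderiv ℝ u z‖ₑ ∂volume.restrict (ball x R) ≠ ⊤ := by
    rw [Measure.restrict_restrict' measurableSet_ball]
    exact (hint.mono_set fun z hz => hs z (hsub hz.2) hz.1).2.ne
  have hinf : {z ∈ ball x (R / 4) | u z = 0}.Infinite := by
    refine Set.Infinite.of_accPt (x := x) (accPt_iff_frequently_nhdsNE.2 ?_)
    exact (hzero.and_eventually (nhdsWithin_le_nhds (ball_mem_nhds x hr))).mono fun z hz => hz.symm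
  filter_upwards [ball_mem_nhds x hr] with z hz
  exact eqOn_zero_of_enorm_dbar_le
    (fun z hz => (hcont z (hsub hz)).continuousWithinAt) (fun z hz => hdiff z (hsub hz))
    (fun z hz => hdbar z (hsub hz)) hfderiv hu hRM (by linarith) hinf hz

end UniqueContinuation

section ConjPair

/-- The field `(ᾱ, v)` attached to a solution `(α, v)` of the first-order system. Conjugating `α`
turns `∂_z α` into `∂̄ ᾱ`, so that the system becomes a bound on `∂̄` of a single field. -/
def conjPair (α : ℂ → ℂ) (v : ℂ → ℝ) (z : ℂ) : ℂ × ℂ :=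
  (conj (α z), (v z : ℂ))

variable {α : ℂ → ℂ} {v : ℂ → ℝ} {z : ℂ} {s K : Set ℂ}

lemma conjPair_eq_zero : conjPair α v z = 0 ↔ α z = 0 ∧ v z = 0 := by
  simp [conjPair, Prod.ext_iff]

lemma norm_conjPair : ‖conjPair α v z‖ = max ‖α z‖ |v z| := by
  simp [conjPair, Prod.norm_def]

lemma continuousAt_conjPair (hα : ContinuousAt α z) (hv : ContinuousAt v z) :
    ContinuousAt (conjPair α v) z := by
  unfold conjPair
  fun_prop

lemma contDiffAt_conjPair (hα : ContDiffAt ℝ 1 α z) (hv : ContDiffAt ℝ 1 v z) :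
    ContDiffAt ℝ 1 (conjPair α v) z :=
  (Complex.conjCLE.contDiff.contDiffAt.comp z hα).prodMk
    (Complex.ofRealCLM.contDiff.contDiffAt.comp z hv)

lemma differentiableAt_conjPair :
    DifferentiableAt ℝ (conjPair α v) z ↔ DifferentiableAt ℝ α z ∧ DifferentiableAt ℝ v z := by
  refine ⟨fun h => ⟨?_, ?_⟩, fun ⟨hα, hv⟩ => ?_⟩
  · simpa [conjPair, Function.comp_def] using Complex.conjCLE.differentiableAt.comp z h.fst
  · simpa [conjPair, Function.comp_def] using Complex.reCLM.differentiableAt.comp z h.snd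
  · exact (Complex.conjCLE.differentiableAt.comp z hα).prodMk
      (Complex.ofRealCLM.differentiableAt.comp z hv)

lemma fderiv_conjPair_apply (hα : DifferentiableAt ℝ α z) (hv : DifferentiableAt ℝ v z) (w : ℂ) :
    fderiv ℝ (conjPair α v) z w = (conj (fderiv ℝ α z w), (fderiv ℝ v z w : ℂ)) := by
  have h := ((Complex.conjCLE : ℂ →L[ℝ] ℂ).hasFDerivAt.comp z hα.hasFDerivAt).prodMk
    (Complex.ofRealCLM.hasFDerivAt.comp z hv.hasFDerivAt)
  exact DFunLike.congr_fun h.fderiv w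

lemma dbar_conjPair (hα : DifferentiableAt ℝ α z) (hv : DifferentiableAt ℝ v z) :
    dbar (conjPair α v) z = (conj (wirtingerZ α z), wirtingerZbar v z) := by
  simp [dbar, wirtingerZ, wirtingerZbar, fderiv_conjPair_apply hα hv, map_ofNat]

lemma enorm_dbar_conjPair_le (hα : DifferentiableAt ℝ α z) (hv : DifferentiableAt ℝ v z) {M : ℝ}
    (hM : max ‖wirtingerZ α z‖ ‖wirtingerZbar v z‖ ≤ M * max ‖α z‖ |v z|) :
    ‖dbar (conjPair α v) z‖ₑ ≤ M.toNNReal * ‖conjPair α v z‖ₑ := by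
  have hle : ‖dbar (conjPair α v) z‖ ≤ M.toNNReal * ‖conjPair α v z‖ := by
    rw [dbar_conjPair hα hv, norm_conjPair, Prod.norm_mk, RCLike.norm_conj]
    refine hM.trans ?_
    gcongr
    exact Real.le_coe_toNNReal M
  rw [enorm_eq_nnnorm, enorm_eq_nnnorm]
  exact_mod_cast hle

lemma opNorm_sq_le_add {F : Type*} [NormedAddCommGroup F] [NormedSpace ℝ F] (L : ℂ →L[ℝ] F) :
    ‖L‖ ^ 2 ≤ ‖L 1‖ ^ 2 + ‖L I‖ ^ 2 := by
  refine (Real.le_sqrt (norm_nonneg _) (by positivity)).1 ?_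
  refine L.opNorm_le_bound (Real.sqrt_nonneg _) fun w => ?_
  have hw : L w = w.re • L 1 + w.im • L I := by
    rw [← map_smul, ← map_smul, ← map_add]
    congr 1
    simp
  have htri : ‖L w‖ ≤ |w.re| * ‖L 1‖ + |w.im| * ‖L I‖ := by
    rw [hw, ← Real.norm_eq_abs, ← Real.norm_eq_abs, ← norm_smul, ← norm_smul]
    exact norm_add_le _ _
  refine htri.trans ?_
  rw [← Real.sqrt_sq (norm_nonneg w), ← Real.sqrt_mul (by positivity), Complex.sq_norm,
    Complex.normSq_apply, ← abs_mul_abs_self w.re, ← abs_mul_abs_self w.im]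
  refine Real.le_sqrt_of_sq_le ?_
  linarith [sq_nonneg (|w.re| * ‖L I‖ - |w.im| * ‖L 1‖)]

lemma norm_fderiv_conjPair_sq_le (α : ℂ → ℂ) (v : ℂ → ℝ) (z : ℂ) :
    ‖fderiv ℝ (conjPair α v) z‖ ^ 2 ≤ DsqC α z + DsqR v z := by
  by_cases h : DifferentiableAt ℝ (conjPair α v) z
  · obtain ⟨hα, hv⟩ := differentiableAt_conjPair.1 h
    have hsq (w : ℂ) :
        ‖fderiv ℝ (conjPair α v) z w‖ ^ 2 ≤ ‖fderiv ℝ α z w‖ ^ 2 + ‖fderiv ℝ v z w‖ ^ 2 := by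
      rw [fderiv_conjPair_apply hα hv, Prod.norm_mk, RCLike.norm_conj, Complex.norm_real]
      rcases max_choice ‖fderiv ℝ α z w‖ ‖fderiv ℝ v z w‖ with hmax | hmax <;> rw [hmax] <;>
        nlinarith
    calc ‖fderiv ℝ (conjPair α v) z‖ ^ 2
        ≤ ‖fderiv ℝ (conjPair α v) z 1‖ ^ 2 + ‖fderiv ℝ (conjPair α v) z I‖ ^ 2 :=
          opNorm_sq_le_add _
      _ ≤ (‖fderiv ℝ α z 1‖ ^ 2 + ‖fderiv ℝ v z 1‖ ^ 2) +
            (‖fderiv ℝ α z I‖ ^ 2 + ‖fderiv ℝ v z I‖ ^ 2) := add_le_add (hsq 1) (hsq I)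
      _ = DsqC α z + DsqR v z := add_add_add_comm _ _ _ _
  · rw [fderiv_zero_of_not_differentiableAt h, norm_zero, zero_pow two_ne_zero, DsqC, DsqR]
    positivity

lemma integrableAtFilter_fderiv_conjPair {p : ℂ} (hs : s ∈ 𝓝 p)
    (hK : ∀ z ∈ K, α z = 0 ∧ v z = 0)
    (hint : IntegrableOn (fun z => DsqC α z + DsqR v z) (s \ K)) :
    IntegrableAtFilter (fderiv ℝ (conjPair α v)) (𝓝[{z | conjPair α v z ≠ 0}] p) := by
  refine ⟨(s \ K) ∩ ball p 1, ?_, ?_⟩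
  · filter_upwards [nhdsWithin_le_nhds hs, nhdsWithin_le_nhds (ball_mem_nhds p one_pos),
      self_mem_nhdsWithin] with z hzs hzball hz
    exact ⟨⟨hzs, fun hzK => hz (conjPair_eq_zero.2 (hK z hzK))⟩, hzball⟩
  · have hfin : volume ((s \ K) ∩ ball p 1) ≠ ⊤ :=
      measure_ne_top_of_subset Set.inter_subset_right measure_ball_lt_top.ne
    refine ((hint.mono_set Set.inter_subset_left).add (integrableOn_const hfin (C := 1))).mono'
      (measurable_fderiv ℝ _).aestronglyMeasurable (Eventually.of_forall fun z => ?_)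
    have := norm_fderiv_conjPair_sq_le α v z
    simp only [Pi.add_apply]
    nlinarith

end ConjPair

theorem vanishing_annulus_general {α : ℂ → ℂ} {v : ℂ → ℝ} {Ω s K : Set ℂ} {p : ℂ} {M : ℝ}
    (hΩ : IsOpen Ω) (hp : p ∈ Ω) (hs : s ∈ 𝓝 p) (hK : ∀ z ∈ K, α z = 0 ∧ v z = 0)
    (hαcont : ContinuousOn α Ω) (hvcont : ContinuousOn v Ω)
    (hα : ContDiffOn ℝ 1 α (Ω \ K)) (hv : ContDiffOn ℝ 1 v (Ω \ K))
    (hsys : ∀ z ∈ Ω \ K,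
      max ‖wirtingerZ α z‖ ‖wirtingerZbar v z‖ ≤ M * max ‖α z‖ |v z|)
    (hint : IntegrableOn (fun z => DsqC α z + DsqR v z) (s \ K)) (hacc : AccPt p (𝓟 K)) :
    ∀ᶠ z in 𝓝 p, α z = 0 ∧ v z = 0 := by
  have hΩp : Ω ∈ 𝓝 p := hΩ.mem_nhds hp
  have hcont : ∀ z ∈ Ω, ContinuousAt (conjPair α v) z := fun z hz =>
    continuousAt_conjPair (hαcont.continuousAt (hΩ.mem_nhds hz))
      (hvcont.continuousAt (hΩ.mem_nhds hz))
  have hnhds : ∀ z ∈ Ω, conjPair α v z ≠ 0 → Ω \ K ∈ 𝓝 z := fun z hz hne => by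
    filter_upwards [hΩ.mem_nhds hz, (hcont z hz).eventually_ne hne] with w hw hwne
    exact ⟨hw, fun hwK => hwne (conjPair_eq_zero.2 (hK w hwK))⟩
  have hdiff : ∀ z ∈ Ω, conjPair α v z ≠ 0 → ContDiffAt ℝ 1 α z ∧ ContDiffAt ℝ 1 v z :=
    fun z hz hne => ⟨hα.contDiffAt (hnhds z hz hne), hv.contDiffAt (hnhds z hz hne)⟩
  have hzero : ∃ᶠ z in 𝓝[≠] p, conjPair α v z = 0 :=
    (accPt_iff_frequently_nhdsNE.1 hacc).mono fun z hz => conjPair_eq_zero.2 (hK z hz)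
  have hvanish := eventually_eq_zero_of_enorm_dbar_le (mem_of_superset hΩp hcont)
    (mem_of_superset hΩp fun z hz hne => (hdiff z hz hne).elim contDiffAt_conjPair)
    (mem_of_superset hΩp fun z hz hne => enorm_dbar_conjPair_le
      ((hdiff z hz hne).1.differentiableAt one_ne_zero)
      ((hdiff z hz hne).2.differentiableAt one_ne_zero)
      (hsys z (mem_of_mem_nhds (hnhds z hz hne))))
    (integrableAtFilter_fderiv_conjPair hs hK hint) hzero
  exact hvanish.mono fun z => conjPair_eq_zero.1

lemma exists_annulus_of_eventually {P : ℂ → Prop} (h : ∀ᶠ z in 𝓝 0, P z) {R : ℝ} (hR : 0 < R) :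
    ∃ a b : ℝ, 0 < a ∧ a < b ∧ b ≤ R ∧ ∀ z : ℂ, a ≤ ‖z‖ → ‖z‖ ≤ b → P z := by
  obtain ⟨b, hb, hball⟩ := nhds_basis_closedBall.eventually_iff.1 h
  have hmin : 0 < min b R := lt_min hb hR
  refine ⟨min b R / 2, min b R, half_pos hmin, half_lt_self hmin, min_le_right _ _, ?_⟩
  exact fun z _ hz => hball (mem_closedBall_zero_iff.2 (hz.trans (min_le_left _ _)))

lemma max_norm_system_le {N₀ C x : ℝ} {s t y : ℂ} (hN₀ : 0 ≤ N₀) (hst : ‖s‖ + ‖t‖ ≤ C) :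
    max ‖-(1 / 2 : ℂ) * (1 + (N₀ : ℂ)) * (1 + s) * (x : ℂ)‖ ‖2 * (N₀ : ℂ) * (1 + t) * y‖ ≤
      2 * (1 + N₀) * (1 + C) * max ‖y‖ |x| := by
  have hs : ‖1 + s‖ ≤ 1 + C := by
    linarith [norm_add_le 1 s, norm_nonneg t, norm_one (α := ℂ)]
  have hC : 0 ≤ 1 + C := (norm_nonneg _).trans hs
  have ht : ‖1 + t‖ ≤ 1 + C := by
    linarith [norm_add_le 1 t, norm_nonneg s, norm_one (α := ℂ)]
  have hN : ‖(1 + N₀ : ℂ)‖ = 1 + N₀ := by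
    rw [← Complex.ofReal_one, ← Complex.ofReal_add, Complex.norm_of_nonneg (by positivity)]
  have hhalf : ‖-(1 / 2 : ℂ)‖ ≤ 2 := by norm_num
  have hN₀' : ‖(2 * N₀ : ℂ)‖ ≤ 2 * (1 + N₀) := by
    rw [norm_mul, Complex.norm_of_nonneg hN₀, Complex.norm_ofNat]
    linarith
  refine max_le ?_ ?_
  · rw [norm_mul, norm_mul, norm_mul, hN, Complex.norm_real]
    gcongr
    exact le_max_right ‖y‖ |x|
  · rw [norm_mul, norm_mul]
    gcongr
    exact le_max_left ‖y‖ |x|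

/-- The core analytic claim of Steps 1–5 of the proof of Lemma 8.10: if `0` is an
accumulation point of the common zero set `K` of a solution `(α, v)` of the first-order
system, then `(α, v)` vanishes identically on some annulus. -/
theorem vanishing_annulus (N₀ C C' γ : ℝ) (hN₀ : 0 < N₀) (hC : 0 ≤ C) (hC' : 0 ≤ C')
    (hγ : γ ∈ Set.Ioc (0:ℝ) 1)
    (α : ℂ → ℂ) (v : ℂ → ℝ) (τ₀ τ₁ : ℂ → ℂ) (K : Set ℂ)
    (hK : K = {z : ℂ | z ∈ ball (0:ℂ) 1 ∧ α z = 0 ∧ v z = 0})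
    (hαcont : ContinuousOn α (ball (0:ℂ) 1))
    (hvcont : ContinuousOn v (ball (0:ℂ) 1))
    (hτ₀ : ContinuousOn τ₀ (ball (0:ℂ) 1))
    (hτ₁ : ContinuousOn τ₁ (ball (0:ℂ) 1))
    (hτbound : ∀ z ∈ ball (0:ℂ) 1, ‖τ₀ z‖ + ‖τ₁ z‖ ≤ C * ‖z‖ ^ 2)
    (hαsmooth : ContDiffOn ℝ (⊤ : ℕ∞) α (ball (0:ℂ) 1 \ K))
    (hvsmooth : ContDiffOn ℝ (⊤ : ℕ∞) v (ball (0:ℂ) 1 \ K))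
    (hsys : ∀ z ∈ ball (0:ℂ) 1 \ K,
      wirtingerZ α z = -(1 / 2 : ℂ) * (1 + (N₀ : ℂ)) * (1 + τ₀ z) * (v z : ℂ) ∧
      wirtingerZbar v z = 2 * (N₀ : ℂ) * (1 + τ₁ z) * α z)
    (hHolder : ∀ z : ℂ, ‖z‖ ≤ 3 / 4 →
      ‖α z‖ + |v z| ≤ C' * Metric.infDist z K ^ γ)
    (hL2 : IntegrableOn (fun z => DsqC α z + DsqR v z) ({z : ℂ | ‖z‖ ≤ 3 / 4} \ K))
    (hlim : Filter.Tendsto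
      (fun ρ : ℝ => ∫ z in {z : ℂ | ‖z‖ ≤ 3 / 4 ∧ 0 < ‖α z‖ + |v z| ∧ ‖α z‖ + |v z| < ρ},
        (DsqC α z + DsqR v z))
      (nhdsWithin 0 (Set.Ioi 0)) (nhds 0))
    (hacc : (0:ℂ) ∈ closure (K \ {0})) :
    ∃ a b : ℝ, 0 < a ∧ a < b ∧ b ≤ 3 / 4 ∧
      ∀ z : ℂ, a ≤ ‖z‖ → ‖z‖ ≤ b → α z = 0 ∧ v z = 0 := by
  have hbound : ∀ z ∈ ball (0:ℂ) 1 \ K, max ‖wirtingerZ α z‖ ‖wirtingerZbar v z‖ ≤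
      2 * (1 + N₀) * (1 + C) * max ‖α z‖ |v z| := fun z hz => by
    rw [(hsys z hz).1, (hsys z hz).2]
    refine max_norm_system_le hN₀.le ((hτbound z hz.1).trans (mul_le_of_le_one_right hC ?_))
    exact pow_le_one₀ (norm_nonneg z) (mem_ball_zero_iff.1 hz.1).le
  have hball : {z : ℂ | ‖z‖ ≤ 3 / 4} ∈ 𝓝 0 :=
    continuous_norm.continuousAt.eventually_le_const (by norm_num)
  exact exists_annulus_of_eventually (vanishing_annulus_general isOpen_ball
    (mem_ball_self one_pos) hball (fun z hz => (hK.subset hz).2) hαcont hvcont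
    (hαsmooth.of_le (mod_cast le_top)) (hvsmooth.of_le (mod_cast le_top)) hbound hL2
    (accPt_principal_iff_clusterPt.2 (mem_closure_iff_clusterPt.1 hacc))) (by norm_num)
end
end
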